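/- arXiv:2504.03898 — 2 statements merged into one kernel-verified Lean document; each statement's English description precedes it below -/
import Mathlib

section
/- Let n ≥ 1 and k ≥ 1. For every integer r ≥ 0, L'_{n,k}(r) = Σ_{w ∈ X_n with cdes(w⁻¹) = k} C(n + r − basc(w), n), where C(a,b) denotes the binomial coefficient (equal to 0 when r < basc(w)). Equivalently, the Ehrhart h*-polynomial (with respect to the lattice ½ℤⁿ) of the half-open type C hypersimplex Δ'_{C_n,k} equals Σ_{w ∈ X_n, cdes(w⁻¹) = k} t^{basc(w)}. -/
/-!
The identity is proved bijectively, from the half-open alcove decomposition of the box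
`0 ≤ y_1 ≤ r`, `0 ≤ y_j ≤ 2r`.

For `w ∈ X_n`, the number `C(n + r - basc w, n)` counts the chains `0 ≤ c_1 ≤ ⋯ ≤ c_n ≤ r` that are
strict at the big ascents of `w`: there are `n + 1` gaps with sum `r`, of which `basc w` must be
positive (`card_good`). Extend `c` to an odd function on `[-n, n]` and put `t = c ∘ w⁻¹`. Let `m i`
be the number of descents of `w⁻¹` between `0` and `i`, and `z i = t i + 2 r m i`. The differences
`y_i = z i - z (i - 1)` form a point of the box (`Good.box`) whose coordinate sum `z n` lies in the
slab numbered `cdes(w⁻¹)`, because `cdes(w⁻¹) = 2 m n + [w⁻¹(n) > 0]` (`cdes_eq`, `Good.slab`).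

It remains to see that `(w, c) ↦ y` is a bijection onto the box. The strictness conditions say
exactly that `w⁻¹` sorts the indices by the order `Prec`: first by `t`, then by decreasing `m`, then
by index (`Good.prec`); geometrically, ties are broken by moving the point towards a generic point
near the origin. As `w⁻¹(1) > 0`, the residues `t i` with `i > 0` lie in `(-r, r]` (`Good.range`), so
the partial sums `z` of `y` determine `t` and `m`, hence the order, hence `w` and `c` (`Good.inj`).
Conversely, splitting the partial sums of any box point into residues and winding numbers and
sorting by `Prec` gives a preimage (`exists_good`, `exists_good_of_box`). The slabs are disjoint
(`InSlab.unique`), so the bijection restricts to each value of `k`.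
-/

open scoped Classical

/-- A signed permutation of length `n`: a permutation `w` of `ℤ` with
`w(-i) = -w(i)` that fixes every integer of absolute value greater than `n`. -/
def IsSignedPerm (n : ℕ) (w : Equiv.Perm ℤ) : Prop :=
  (∀ i : ℤ, w (-i) = - w i) ∧ ∀ i : ℤ, (n : ℤ) < |i| → w i = i

/-- Membership in `X_n := {w ∈ 𝔅_n : w⁻¹(1) > 0}`. -/
def InXn (n : ℕ) (w : Equiv.Perm ℤ) : Prop :=
  IsSignedPerm n w ∧ 0 < w.symm 1

/-- The type B descent number `des_B(w) = #{i ∈ {0,…,n-1} : w_i > w_{i+1}}`,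
with the convention `w_0 = 0` (automatic, since a signed permutation fixes `0`). -/
noncomputable def desB (n : ℕ) (w : Equiv.Perm ℤ) : ℕ :=
  ((Finset.range n).filter fun i => w ((i : ℤ) + 1) < w (i : ℤ)).card

/-- The flag-excedance `fexc(w) = 2·#{i : w_i > i} + #{i : w_i < 0}`. -/
noncomputable def fexc (n : ℕ) (w : Equiv.Perm ℤ) : ℕ :=
  2 * ((Finset.Icc (1 : ℤ) (n : ℤ)).filter fun i => i < w i).card
    + ((Finset.Icc (1 : ℤ) (n : ℤ)).filter fun i => w i < 0).card

/-- The cyclic successor on `{-n,…,-1,1,…,n}` (with `(-1)⁺ = 1` and `n⁺ = -n`). -/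
def csucc (n : ℕ) (i : ℤ) : ℤ :=
  if i = -1 then 1 else if i = (n : ℤ) then -(n : ℤ) else i + 1

/-- The circular descent set `CDes(w) = {i ∈ {-n,…,-1,1,…,n} : w(i) > w(i⁺)}`. -/
noncomputable def cdesSet (n : ℕ) (w : Equiv.Perm ℤ) : Finset ℤ :=
  (Finset.Icc (-(n : ℤ)) (n : ℤ)).filter fun i => i ≠ 0 ∧ w (csucc n i) < w i

/-- The circular descent number `cdes(w) = |CDes(w)|`. -/
noncomputable def cdes (n : ℕ) (w : Equiv.Perm ℤ) : ℕ := (cdesSet n w).card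

/-- `a ≪ b`: there is a nonzero integer strictly between `a` and `b`. -/
def Lll (a b : ℤ) : Prop := ∃ c : ℤ, c ≠ 0 ∧ a < c ∧ c < b

/-- The big ascent number `basc(w) = |BAsc(w)|`, where `BAsc(w) ⊆ {-1,1,…,n}`:
`-1 ∈ BAsc(w)` iff `w_1 ≥ 2`; for `1 ≤ i ≤ n-1`, `i ∈ BAsc(w)` iff `w_i ≪ w_{i+1}`;
and `n ∈ BAsc(w)` iff `w_n ≤ -2`. -/
noncomputable def basc (n : ℕ) (w : Equiv.Perm ℤ) : ℕ :=
  ((insert (-1 : ℤ) (Finset.Icc (1 : ℤ) (n : ℤ))).filter fun i =>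
    if i = -1 then 2 ≤ w 1
    else if i = (n : ℤ) then w (n : ℤ) ≤ -2
    else Lll (w i) (w (i + 1))).card

/-- `L'_{n,k}(r)`: the number of half-integer points in the `r`-th dilate of the
half-open type C hypersimplex `Δ'_{C_n,k}`, in the `y`-coordinates. -/
noncomputable def Lp (n k r : ℕ) : ℕ :=
  if k = 1 then
    Set.ncard {y : Fin n → ℤ |
      (∀ j, 0 ≤ y j ∧ y j ≤ 2 * (r : ℤ)) ∧ (∀ j : Fin n, (j : ℕ) = 0 → y j ≤ (r : ℤ)) ∧
      0 ≤ ∑ j, y j ∧ ∑ j, y j ≤ (r : ℤ)}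
  else
    Set.ncard {y : Fin n → ℤ |
      (∀ j, 0 ≤ y j ∧ y j ≤ 2 * (r : ℤ)) ∧ (∀ j : Fin n, (j : ℕ) = 0 → y j ≤ (r : ℤ)) ∧
      ((k : ℤ) - 1) * r < ∑ j, y j ∧ ∑ j, y j ≤ (k : ℤ) * r}

/-- `L_{n,k}(r)`: the number of half-integer points in the `r`-th dilate of the
closed type C hypersimplex `Δ_{C_n,k}`, in the `y`-coordinates. -/
noncomputable def Lc (n k r : ℕ) : ℕ :=
  Set.ncard {y : Fin n → ℤ |
    (∀ j, 0 ≤ y j ∧ y j ≤ 2 * (r : ℤ)) ∧ (∀ j : Fin n, (j : ℕ) = 0 → y j ≤ (r : ℤ)) ∧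
    ((k : ℤ) - 1) * r ≤ ∑ j, y j ∧ ∑ j, y j ≤ (k : ℤ) * r}

/-- `ψ_{n,k} = #{w ∈ X_n : basc(w) = k}`. -/
noncomputable def psiN (n k : ℕ) : ℕ :=
  {w : Equiv.Perm ℤ | InXn n w ∧ basc n w = k}.ncard

/-- `ψ_{n,k}` with an integer index (`0` for negative `k`). -/
noncomputable def psiZ (n : ℕ) (k : ℤ) : ℕ :=
  {w : Equiv.Perm ℤ | InXn n w ∧ (basc n w : ℤ) = k}.ncard

/-- `Ψ_{C_n}(t) = Σ_k ψ_{n,k} t^k ∈ ℤ[t]`. -/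
noncomputable def PsiC (n : ℕ) : Polynomial ℤ :=
  ∑ᶠ k : ℕ, (psiN n k : Polynomial ℤ) * Polynomial.X ^ k

/-- `Ψ_{C_n}(t)` with rational coefficients. -/
noncomputable def PsiCQ (n : ℕ) : Polynomial ℚ :=
  ∑ᶠ k : ℕ, (psiN n k : Polynomial ℚ) * Polynomial.X ^ k

/-- The descent number of a permutation of `{1,…,m}`. -/
noncomputable def desA (m : ℕ) (σ : Equiv.Perm (Fin m)) : ℕ :=
  (Finset.univ.filter fun i : Fin m =>
    ∃ h : (i : ℕ) + 1 < m, σ ⟨(i : ℕ) + 1, h⟩ < σ i).card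

/-- The classical (type A) Eulerian polynomial `E_m^A(t) = Σ_{σ ∈ S_m} t^{des σ}`. -/
noncomputable def EulerianA (m : ℕ) : Polynomial ℚ :=
  ∑ σ : Equiv.Perm (Fin m), Polynomial.X ^ desA m σ

/-- The relation `u ⇀ w` on `X_n`. -/
def covRel (n : ℕ) (u w : Equiv.Perm ℤ) : Prop :=
  InXn n u ∧ InXn n w ∧
    ((2 ≤ w 1 ∧ u = w * Equiv.swap (1 : ℤ) (-1)) ∨
     (∃ i : ℤ, 1 ≤ i ∧ i ≤ (n : ℤ) - 1 ∧ Lll (w i) (w (i + 1)) ∧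
        u = w * (Equiv.swap i (i + 1) * Equiv.swap (-i) (-(i + 1)))) ∨
     (w (n : ℤ) ≤ -2 ∧ u = w * Equiv.swap (n : ℤ) (-(n : ℤ))))

/-- The `i`-th coordinate (`1 ≤ i ≤ n`) of the vertex `v^j(w)` (`1 ≤ j ≤ n+1`):
`v^{n+1}_i(w) = #({1,…,i-1} ∩ CDes(w⁻¹))` and `v^j = v^{j+1} + ½ e_{w_j}`. -/
noncomputable def vcoord (n : ℕ) (w : Equiv.Perm ℤ) (j : ℕ) (i : ℕ) : ℚ :=
  ((Finset.Icc (1 : ℤ) ((i : ℤ) - 1) ∩ cdesSet n w.symm).card : ℚ)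
    + (1 / 2) * ∑ m ∈ Finset.Icc (j : ℤ) (n : ℤ),
        (if w m = (i : ℤ) then (1 : ℚ) else if w m = -(i : ℤ) then -1 else 0)

/-- `u` is the image `τ_n(w)`: in window notation `u = 1 w'_1 ⋯ w'_n`, where
`w'_i = w_i + 1` if `w_i > 0` and `w'_i = w_i - 1` if `w_i < 0`. -/
def isTau (n : ℕ) (w u : Equiv.Perm ℤ) : Prop :=
  u 1 = 1 ∧ ∀ i : ℤ, 1 ≤ i → i ≤ (n : ℤ) →
    u (i + 1) = if 0 < w i then w i + 1 else w i - 1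

/-! ### Signed permutations as permutations of `[-n, n]` -/

lemma sp_zero {n : ℕ} {w : Equiv.Perm ℤ} (h : IsSignedPerm n w) : w 0 = 0 := by
  have := h.1 0
  simp at this
  omega

lemma sp_symm {n : ℕ} {w : Equiv.Perm ℤ} (h : IsSignedPerm n w) : IsSignedPerm n w.symm := by
  refine ⟨fun i => ?_, fun i hi => ?_⟩
  · rw [Equiv.symm_apply_eq, h.1, Equiv.apply_symm_apply]
  · rw [Equiv.symm_apply_eq, h.2 i hi]

lemma sp_abs {n : ℕ} {w : Equiv.Perm ℤ} (h : IsSignedPerm n w) {i : ℤ} (hi : |i| ≤ n) :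
    |w i| ≤ n := by
  by_contra hc
  push Not at hc
  have h1 := w.injective (h.2 _ hc)
  rw [h1] at hc
  omega

lemma sp_mem {n : ℕ} {w : Equiv.Perm ℤ} (h : IsSignedPerm n w) {i : ℤ}
    (h1 : -(n : ℤ) ≤ i) (h2 : i ≤ n) : -(n : ℤ) ≤ w i ∧ w i ≤ n :=
  abs_le.1 (sp_abs h (abs_le.2 ⟨h1, h2⟩))

/-- A signed permutation is recovered from the order it induces on `[-n, n]`: the value `v i` is
the rank of `i`. -/
lemma sp_rank {n : ℕ} {v : Equiv.Perm ℤ} (h : IsSignedPerm n v) {i : ℤ}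
    (h1 : -(n : ℤ) ≤ i) (h2 : i ≤ n) :
    v i = (((Finset.Icc (-(n : ℤ)) n).filter fun j => v j < v i).card : ℤ) - n := by
  have hb := sp_mem h h1 h2
  have : ((Finset.Icc (-(n : ℤ)) n).filter fun j => v j < v i).image v
      = Finset.Ico (-(n : ℤ)) (v i) := by
    ext a
    simp only [Finset.mem_image, Finset.mem_filter, Finset.mem_Icc, Finset.mem_Ico]
    constructor
    · rintro ⟨j, ⟨⟨hj1, hj2⟩, hj⟩, rfl⟩
      exact ⟨(sp_mem h hj1 hj2).1, hj⟩
    · rintro ⟨ha, ha'⟩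
      refine ⟨v.symm a, ⟨?_, ?_⟩, by simp⟩
      · exact sp_mem (sp_symm h) ha (by omega)
      · simpa using ha'
  rw [← Finset.card_image_of_injective _ v.injective, this, Int.card_Ico]
  omega

lemma sp_ext {n : ℕ} {v v' : Equiv.Perm ℤ} (h : IsSignedPerm n v) (h' : IsSignedPerm n v')
    (hlt : ∀ i j : ℤ, -(n : ℤ) ≤ i → i ≤ n → -(n : ℤ) ≤ j → j ≤ n →
      (v i < v j ↔ v' i < v' j)) : v = v' := by
  ext i
  by_cases hi : |i| ≤ n
  · obtain ⟨h1, h2⟩ := abs_le.1 hi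
    rw [sp_rank h h1 h2, sp_rank h' h1 h2]
    congr 3
    apply Finset.filter_congr
    intro j hj
    rw [Finset.mem_Icc] at hj
    exact hlt j i hj.1 hj.2 h1 h2
  · rw [h.2 i (by omega), h'.2 i (by omega)]

instance finite_sp (n : ℕ) : Finite {w : Equiv.Perm ℤ // IsSignedPerm n w} := by
  let F : {w : Equiv.Perm ℤ // IsSignedPerm n w} →
      (Set.Icc (-(n : ℤ)) n → Set.Icc (-(n : ℤ)) n) :=
    fun w i => ⟨w.1 i.1, sp_mem w.2 i.2.1 i.2.2⟩
  apply Finite.of_injective F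
  intro w w' hF
  apply Subtype.ext
  apply sp_ext w.2 w'.2
  have key : ∀ i : ℤ, -(n : ℤ) ≤ i → i ≤ n → w.1 i = w'.1 i := fun i h1 h2 =>
    congrArg Subtype.val (congrFun hF ⟨i, h1, h2⟩)
  intro i j h1 h2 h3 h4
  rw [key i h1 h2, key j h3 h4]

/-! ### Descents and the winding function -/

/-- The indicator of a descent of `v` at `i`, with `0` included among the indices. -/
def dsc (v : Equiv.Perm ℤ) (i : ℤ) : ℤ := if v (i + 1) < v i then 1 else 0

/-- The winding function: the signed number of descents of `v` between `0` and `i`. -/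
noncomputable def wind (v : Equiv.Perm ℤ) (i : ℤ) : ℤ :=
  ∑ l ∈ Finset.Ico 0 i, dsc v l - ∑ l ∈ Finset.Ico i 0, dsc v l

lemma dsc_nonneg (v : Equiv.Perm ℤ) (i : ℤ) : 0 ≤ dsc v i := by
  unfold dsc; split_ifs <;> simp

lemma wind_zero (v : Equiv.Perm ℤ) : wind v 0 = 0 := by simp [wind]

lemma wind_succ (v : Equiv.Perm ℤ) (i : ℤ) : wind v (i + 1) = wind v i + dsc v i := by
  unfold wind
  rcases le_or_gt 0 i with h | h
  · rw [Finset.Ico_eq_empty (a := i + 1) (b := 0) (by omega),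
      Finset.Ico_eq_empty (a := i) (b := 0) (by omega),
      ← Finset.insert_Ico_right_eq_Ico_add_one h, Finset.sum_insert (by simp)]
    simp [add_comm]
  · rw [Finset.Ico_eq_empty (a := 0) (b := i + 1) (by omega),
      Finset.Ico_eq_empty (a := 0) (b := i) (by omega),
      ← Finset.insert_Ico_add_one_left_eq_Ico h, Finset.sum_insert (by simp)]
    simp

lemma wind_mono (v : Equiv.Perm ℤ) : Monotone (wind v) :=
  monotone_int_of_le_succ fun i => by
    rw [wind_succ]; have := dsc_nonneg v i; omega

lemma dsc_neg {n : ℕ} {v : Equiv.Perm ℤ} (h : IsSignedPerm n v) (i : ℤ) :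
    dsc v (-i - 1) = dsc v i := by
  unfold dsc
  have e1 : v (-i - 1 + 1) = - v i := by rw [← h.1]; congr 1; ring
  have e2 : v (-i - 1) = - v (i + 1) := by rw [← h.1]; congr 1; ring
  rw [e1, e2]
  congr 1
  simp

lemma wind_neg {n : ℕ} {v : Equiv.Perm ℤ} (h : IsSignedPerm n v) (i : ℤ) :
    wind v (-i) = - wind v i := by
  have step : ∀ i : ℤ, wind v (-(i+1)) + wind v (i+1) = wind v (-i) + wind v i := by
    intro i
    have e1 := wind_succ v i
    have e2 := wind_succ v (-i - 1)
    rw [dsc_neg h] at e2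
    have e3 : -i - 1 + 1 = -i := by ring
    have e4 : -(i+1) = -i - 1 := by ring
    rw [e3] at e2
    rw [e4]
    omega
  have : wind v (-i) + wind v i = 0 := by
    induction i using Int.induction_on with
    | zero => simp [wind_zero]
    | succ i ih => rw [step, ih]
    | pred i ih => rw [← step]; simpa using ih
  omega

/-- A relation that is transitive and holds between neighbours holds throughout an interval. -/
lemma rel_of_step {R : ℤ → ℤ → Prop} (htr : ∀ a b c, R a b → R b c → R a c) {a b : ℤ}
    (hs : ∀ p, a ≤ p → p < b → R p (p + 1)) {p q : ℤ} (hp : a ≤ p) (hpq : p < q)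
    (hq : q ≤ b) : R p q := by
  have : ∀ q, p + 1 ≤ q → q ≤ b → R p q := by
    intro q h1
    induction q, h1 using Int.leInduction with
    | base => intro h; exact hs p hp (by omega)
    | succ q h ih => intro h2; exact htr _ _ _ (ih (by omega)) (hs q (by omega) (by omega))
  exact this q (by omega) hq

/-- If `j < i` but `v` orders them the other way, there is a descent in between. -/
lemma wind_lt {v : Equiv.Perm ℤ} {i j : ℤ} (hji : j < i) (hv : v i < v j) :
    wind v j < wind v i := by
  by_contra hc
  have heq : ∀ p, j ≤ p → p < i → v p ≤ v (p + 1) := by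
    intro p h1 h2
    have a1 := wind_mono v h1
    have a2 := wind_mono v (show p + 1 ≤ i by omega)
    rw [wind_succ] at a2
    unfold dsc at a2
    split_ifs at a2 <;> omega
  have := rel_of_step (R := fun p q => v p ≤ v q) (fun _ _ _ => le_trans) heq le_rfl hji le_rfl
  omega

/-- The tie-breaking order on indices: first by residue `t`, then by decreasing winding number `m`,
then by index. It is the order of the residues after the point is moved slightly towards a generic
point near the origin. -/
def Prec (t m : ℤ → ℤ) (i j : ℤ) : Prop :=
  t i < t j ∨ t i = t j ∧ (m j < m i ∨ m i = m j ∧ i < j)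

lemma Prec.trans {t m : ℤ → ℤ} {i j l : ℤ} (h : Prec t m i j) (h' : Prec t m j l) :
    Prec t m i l := by
  unfold Prec at *; omega

lemma Prec.asymm {t m : ℤ → ℤ} {i j : ℤ} (h : Prec t m i j) : ¬ Prec t m j i := by
  unfold Prec at *; omega

lemma prec_total {t m : ℤ → ℤ} {i j : ℤ} (h : i ≠ j) : Prec t m i j ∨ Prec t m j i := by
  unfold Prec; omega

lemma prec_neg {t m : ℤ → ℤ} (ht : ∀ i, t (-i) = - t i) (hm : ∀ i, m (-i) = - m i) {i j : ℤ} :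
    Prec t m (-i) (-j) ↔ Prec t m j i := by
  unfold Prec; rw [ht, ht, hm, hm]; omega
/-! ### Chains compatible with a signed permutation -/

/-- The step condition at `q ∈ {0, …, n}`: `q ∈ BAsc(w)`, the index `-1` of the big ascent set
being encoded as `q = 0` (recall `w 0 = 0`). -/
def Big (n : ℕ) (w : Equiv.Perm ℤ) (q : ℤ) : Prop :=
  if q = n then w n ≤ -2 else Lll (w q) (w (q + 1))

/-- The gaps of the chain `0 = c 0 ≤ c 1 ≤ ⋯ ≤ c n ≤ r`, indexed by `q ∈ {0, …, n}`. -/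
def gap (n r : ℕ) (c : ℤ → ℤ) (q : ℤ) : ℤ := (if q = n then (r : ℤ) else c (q + 1)) - c q

/-- The lattice points of the half-open alcove of `w` dilated by `r`, in sorted coordinates: chains
`0 ≤ c 1 ≤ ⋯ ≤ c n ≤ r` that are strict at the big ascents of `w`. They are encoded as odd functions
on `ℤ` supported on `[-n, n]`. -/
structure Good (n r : ℕ) (w : Equiv.Perm ℤ) (c : ℤ → ℤ) : Prop where
  odd : ∀ p, c (-p) = - c p
  zero : ∀ p, (n : ℤ) < p → c p = 0
  gap_le : ∀ q : ℤ, 0 ≤ q → q ≤ n → (if Big n w q then 1 else 0) ≤ gap n r c q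

section GoodLemmas

variable {n r : ℕ} {w : Equiv.Perm ℤ} {c : ℤ → ℤ}

lemma Good.at_zero (hc : Good n r w c) : c 0 = 0 := by
  have := hc.odd 0
  simp at this
  omega

lemma Good.step_nonneg (hc : Good n r w c) {p : ℤ} (h0 : 0 ≤ p) (hp : p < n) :
    c p ≤ c (p + 1) ∧ (c p = c (p + 1) → ¬ Lll (w p) (w (p + 1))) := by
  have := hc.gap_le p h0 hp.le
  unfold gap Big at this
  rw [if_neg hp.ne, if_neg hp.ne] at this
  split_ifs at this with h
  · exact ⟨by omega, fun h => by omega⟩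
  · exact ⟨by omega, fun _ => h⟩

lemma Good.step (hw : IsSignedPerm n w) (hc : Good n r w c) {p : ℤ} (h0 : -(n : ℤ) ≤ p)
    (hp : p < n) : c p ≤ c (p + 1) ∧ (c p = c (p + 1) → ¬ Lll (w p) (w (p + 1))) := by
  rcases le_or_gt 0 p with h | h
  · exact hc.step_nonneg h hp
  · have h1 := hc.step_nonneg (p := -(p + 1)) (by omega) (by omega)
    have e : -(p + 1) + 1 = -p := by ring
    rw [e, hc.odd, hc.odd, hw.1, hw.1] at h1
    refine ⟨by omega, fun h2 ⟨a, ha⟩ => h1.2 (by omega) ⟨-a, ?_⟩⟩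
    omega

lemma Good.mono (hw : IsSignedPerm n w) (hc : Good n r w c) {p q : ℤ} (h0 : -(n : ℤ) ≤ p)
    (hpq : p ≤ q) (hq : q ≤ n) : c p ≤ c q := by
  rcases hpq.eq_or_lt with rfl | h
  · rfl
  · exact rel_of_step (R := fun p q => c p ≤ c q) (fun _ _ _ => le_trans)
      (fun p h1 h2 => (hc.step hw h1 h2).1) h0 h hq

lemma Good.le_r (hw : IsSignedPerm n w) (hc : Good n r w c) {p : ℤ} (h0 : -(n : ℤ) ≤ p)
    (hp : p ≤ n) : -(r : ℤ) ≤ c p ∧ c p ≤ r := by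
  have h := hc.gap_le n (by omega) le_rfl
  have h1 : c n ≤ r := by
    unfold gap at h
    rw [if_pos rfl] at h
    split_ifs at h <;> omega
  have h2 := hc.mono hw (p := p) (q := n) h0 hp le_rfl
  have h3 := hc.mono hw (p := -p) (q := n) (by omega) (by omega) le_rfl
  rw [hc.odd] at h3
  omega

/-- The order of positions is the tie-breaking order of the values: among equal chain entries the
big ascent conditions force the winding number to decrease weakly, and the values to increase
while it stays constant. -/
lemma Good.prec (hw : InXn n w) (hc : Good n r w c) {p q : ℤ} (h0 : -(n : ℤ) ≤ p)
    (hpq : p < q) (hq : q ≤ n) :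
    Prec (fun i => c (w.symm i)) (wind w.symm) (w p) (w q) := by
  refine rel_of_step (R := fun p q => Prec (fun i => c (w.symm i)) (wind w.symm) (w p) (w q))
    (fun _ _ _ => Prec.trans) ?_ h0 hpq hq
  intro p h1 h2
  have hs := hc.step hw.1 h1 h2
  have z1 : w.symm 0 = 0 := sp_zero (sp_symm hw.1)
  have hx := hw.2
  unfold Prec
  simp only [Equiv.symm_apply_apply]
  rcases hs.1.lt_or_eq with h | h
  · exact Or.inl h
  refine Or.inr ⟨h, ?_⟩
  have hL := hs.2 h
  have hne : w p ≠ w (p + 1) := fun h => by have := w.injective h; omega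
  rcases lt_or_gt_of_ne hne with hlt | hgt
  · right
    refine ⟨?_, hlt⟩
    have hcase : w (p + 1) = w p + 1 ∨ (w p = -1 ∧ w (p + 1) = 1) := by
      by_contra hcon
      apply hL
      by_cases h0 : w p = -1
      · exact ⟨1, by omega, by omega, by omega⟩
      · exact ⟨w p + 1, by omega, by omega, by omega⟩
    rcases hcase with h3 | ⟨h3, h4⟩
    · rw [h3, wind_succ]
      unfold dsc
      rw [← h3, Equiv.symm_apply_apply, Equiv.symm_apply_apply, if_neg (by omega)]
      omega
    · rw [h3, h4]
      have e1 := wind_succ w.symm (-1)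
      have e2 := wind_succ w.symm 0
      unfold dsc at e1 e2
      have e3 : w.symm (-1) = - w.symm 1 := (sp_symm hw.1).1 1
      norm_num [z1, e3] at e1 e2
      rw [if_neg (by omega)] at e1 e2
      omega
  · left
    exact wind_lt hgt (by simp)

lemma Good.prec_iff (hw : InXn n w) (hc : Good n r w c) {i j : ℤ} (hi : -(n : ℤ) ≤ i)
    (hi' : i ≤ n) (hj : -(n : ℤ) ≤ j) (hj' : j ≤ n) :
    w.symm i < w.symm j ↔ Prec (fun i => c (w.symm i)) (wind w.symm) i j := by
  have bi := sp_mem (sp_symm hw.1) hi hi'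
  have bj := sp_mem (sp_symm hw.1) hj hj'
  constructor
  · intro h
    simpa using hc.prec hw bi.1 h bj.2
  · intro h
    rcases lt_trichotomy (w.symm i) (w.symm j) with h1 | h1 | h1
    · exact h1
    · have := w.symm.injective h1
      subst this
      exact absurd h h.asymm
    · have h2 := hc.prec hw bj.1 h1 bi.2
      simp only [Equiv.apply_symm_apply] at h2
      exact absurd h h2.asymm

lemma wind_one (hw : InXn n w) : wind w.symm 1 = 0 := by
  have e2 := wind_succ w.symm 0
  have z1 : w.symm 0 = 0 := sp_zero (sp_symm hw.1)
  have hx := hw.2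
  unfold dsc at e2
  norm_num [z1] at e2
  rw [if_neg (by omega), wind_zero] at e2
  omega

/-- The residues of positive indices lie in the half-open interval `(-r, r]` (degenerate for
`r = 0`). This is where the normalization `w⁻¹(1) > 0` rules out the wall `t = -r`. -/
lemma Good.range (hw : InXn n w) (hc : Good n r w c) {i : ℤ} (h1 : 1 ≤ i) (hi : i ≤ n) :
    (-(r : ℤ) < c (w.symm i) ∧ c (w.symm i) ≤ r) ∨
      (r = 0 ∧ c (w.symm i) = 0 ∧ wind w.symm i = 0) := by
  have hsv := sp_symm hw.1
  have bi := sp_mem hsv (i := i) (by omega) hi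
  have hb := hc.le_r hw.1 bi.1 bi.2
  rcases hb.1.lt_or_eq with h | h
  · exact Or.inl ⟨h, hb.2⟩
  right
  have hx := hw.2
  -- On the wall `t i = -r` the chain equals `r` from the position of `-i` to the end, so its last
  -- gap vanishes and `w n ≥ -1`.
  have hneg : c (w.symm (-i)) = r := by rw [hsv.1, hc.odd]; omega
  have bni := sp_mem hsv (i := -i) (by omega) (by omega)
  have hcn : c n = r := by
    have := hc.mono hw.1 bni.1 bni.2 le_rfl
    have := hc.le_r hw.1 (p := n) (by omega) le_rfl
    omega
  have hlast : -1 ≤ w n := by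
    have := hc.gap_le n (by omega) le_rfl
    unfold gap Big at this
    rw [if_pos rfl, if_pos rfl, hcn] at this
    split_ifs at this <;> omega
  have hm1 : wind w.symm (-1) = 0 := by rw [wind_neg hsv, wind_one hw]; rfl
  have hge : 0 ≤ wind w.symm (w n) := hm1 ▸ wind_mono w.symm hlast
  have hle : wind w.symm (-i) ≤ 0 := hm1 ▸ wind_mono w.symm (show -i ≤ -1 by omega)
  have hw0 : wind w.symm (-i) = 0 := by
    rcases bni.2.lt_or_eq with h2 | h2
    · have h3 := hc.prec hw bni.1 h2 le_rfl
      unfold Prec at h3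
      simp only [Equiv.apply_symm_apply, Equiv.symm_apply_apply] at h3
      omega
    · have : w n = -i := by rw [← h2]; simp
      rw [this] at hge
      omega
  -- no descent separates `-i` from `-1`, so `-i` sits at a negative position
  have hpos : w.symm (-i) ≤ w.symm (-1) := by
    by_contra hcon
    push Not at hcon
    rcases (show -i ≤ -1 by omega).lt_or_eq with h2 | h2
    · have := wind_lt h2 hcon
      omega
    · rw [h2] at hcon; omega
  have e3 : w.symm (-1) = - w.symm 1 := hsv.1 1
  have h4 := hc.mono hw.1 bni.1 (show w.symm (-i) ≤ 0 by omega) (by omega)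
  rw [hc.at_zero] at h4
  rw [wind_neg hsv] at hw0
  omega

end GoodLemmas

/-! ### The map from alcove points to the box -/

/-- The `i`-th coordinate (counted from `0`) of the box point attached to `(w, c)`: the difference
of consecutive residues, plus `2r` at each descent of `w⁻¹`. -/
def stepY (r : ℕ) (w : Equiv.Perm ℤ) (c : ℤ → ℤ) (i : ℤ) : ℤ :=
  c (w.symm (i + 1)) - c (w.symm i) + 2 * r * dsc w.symm i

/-- The box `0 ≤ y_1 ≤ r`, `0 ≤ y_j ≤ 2r`. -/
def InBox (n r : ℕ) (y : Fin n → ℤ) : Prop :=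
  (∀ j, 0 ≤ y j ∧ y j ≤ 2 * (r : ℤ)) ∧ (∀ j : Fin n, (j : ℕ) = 0 → y j ≤ (r : ℤ))

/-- The slab condition on the coordinate sum, closed from below exactly for `k = 1`. -/
def InSlab (k r : ℕ) (s : ℤ) : Prop :=
  if k = 1 then 0 ≤ s ∧ s ≤ (r : ℤ) else ((k : ℤ) - 1) * r < s ∧ s ≤ (k : ℤ) * r

lemma InSlab.unique {k k' r : ℕ} {s : ℤ} (hk : 1 ≤ k) (hk' : 1 ≤ k') (h : InSlab k r s)
    (h' : InSlab k' r s) : k = k' := by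
  unfold InSlab at h h'
  have key : ∀ a b : ℕ, 1 ≤ a → a < b → s ≤ (a : ℤ) * r → ((b : ℤ) - 1) * r < s → False := by
    intro a b _ hab h1 h2
    have : (a : ℤ) * r ≤ ((b : ℤ) - 1) * r :=
      mul_le_mul_of_nonneg_right (by omega) (by omega)
    omega
  have e : k = 1 → s ≤ (k : ℤ) * r := by rintro rfl; rw [if_pos rfl] at h; simpa using h.2
  have e' : k' = 1 → s ≤ (k' : ℤ) * r := by rintro rfl; rw [if_pos rfl] at h'; simpa using h'.2
  rcases lt_trichotomy k k' with hlt | heq | hlt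
  · rw [if_neg (by omega)] at h'
    refine (key k k' hk hlt ?_ h'.1).elim
    by_cases hk1 : k = 1
    · exact e hk1
    · rw [if_neg hk1] at h; exact h.2
  · exact heq
  · rw [if_neg (by omega)] at h
    refine (key k' k hk' hlt ?_ h.1).elim
    by_cases hk1 : k' = 1
    · exact e' hk1
    · rw [if_neg hk1] at h'; exact h'.2

section Forward

variable {n r : ℕ} {w : Equiv.Perm ℤ} {c : ℤ → ℤ}

lemma Good.box (hw : InXn n w) (hc : Good n r w c) :
    InBox n r fun i : Fin n => stepY r w c i := by
  have hsv := sp_symm hw.1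
  refine ⟨fun j => ?_, fun j hj => ?_⟩
  · have hj := j.2
    have b1 := sp_mem hsv (i := (j : ℤ)) (by omega) (by omega)
    have b2 := sp_mem hsv (i := (j : ℤ) + 1) (by omega) (by omega)
    have l1 := hc.le_r hw.1 b1.1 b1.2
    have l2 := hc.le_r hw.1 b2.1 b2.2
    simp only [stepY, dsc]
    split_ifs with h
    · have := hc.mono hw.1 b2.1 h.le b1.2
      omega
    · have := hc.mono hw.1 b1.1 (not_lt.1 h) b2.2
      omega
  · have hn := j.2
    have b2 := sp_mem hsv (i := 1) (by omega) (by omega)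
    have l2 := hc.le_r hw.1 b2.1 b2.2
    have z1 : w.symm 0 = 0 := sp_zero hsv
    have e := wind_succ w.symm 0
    rw [zero_add, wind_one hw, wind_zero] at e
    simp only [stepY, hj]
    norm_num [z1, hc.at_zero, ← e]
    rw [show dsc w.symm 0 = 0 by omega]
    omega

/-- Partial sums of the box coordinates are residues plus `2r` times winding numbers. -/
lemma Good.sum (hw : InXn n w) (hc : Good n r w c) (m : ℕ) :
    ∑ i ∈ Finset.range m, stepY r w c i = c (w.symm m) + 2 * r * wind w.symm m := by
  induction m with
  | zero => simp [wind_zero, sp_zero (sp_symm hw.1), hc.at_zero]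
  | succ m ih =>
    rw [Finset.sum_range_succ, ih]
    push_cast
    rw [wind_succ, stepY]
    ring

/-- The circular descent number of `v` in terms of its winding number at `n`. -/
lemma cdes_eq (hn : 1 ≤ n) {v : Equiv.Perm ℤ} (hv : IsSignedPerm n v) (h1 : 0 < v 1) :
    (cdes n v : ℤ) = 2 * wind v n + if 0 < v n then 1 else 0 := by
  have z1 : v 0 = 0 := sp_zero hv
  have em : v (-1) = - v 1 := hv.1 1
  set A := (Finset.Ico (1 : ℤ) n).filter fun i => v (i + 1) < v i with hA
  have hset : cdesSet n v = A ∪ A.image (fun i => -i - 1) ∪ (if 0 < v n then {(n : ℤ)} else ∅) := by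
    have hcs : ∀ i : ℤ, 1 ≤ i → i < n → csucc n i = i + 1 := by
      intro i h1 h2; unfold csucc; rw [if_neg (by omega), if_neg (by omega)]
    have hcs' : ∀ i : ℤ, i < -1 → csucc n i = i + 1 := by
      intro i h1; unfold csucc; rw [if_neg (by omega), if_neg (by omega)]
    have hcn : csucc n n = -n := by unfold csucc; rw [if_neg (by omega), if_pos rfl]
    have hmem : ∀ i, i ∈ (if 0 < v n then ({(n : ℤ)} : Finset ℤ) else ∅) ↔ i = n ∧ 0 < v n := by
      intro i; split_ifs with h <;> simp [h]
    have hrefl : ∀ i, v (-i - 1 + 1) < v (-i - 1) ↔ v (i + 1) < v i := by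
      intro i
      have e1 : v (-i - 1 + 1) = - v i := by rw [← hv.1]; congr 1; ring
      have e2 : v (-i - 1) = - v (i + 1) := by rw [← hv.1]; congr 1; ring
      rw [e1, e2]; omega
    ext i
    simp only [cdesSet, Finset.mem_union, hmem, hA, Finset.mem_image, Finset.mem_filter,
      Finset.mem_Icc, Finset.mem_Ico]
    constructor
    · rintro ⟨⟨b1, b2⟩, b3, b4⟩
      rcases lt_trichotomy i (-1) with h | h | h
      · rw [hcs' i h] at b4
        refine Or.inl (Or.inr ⟨-i - 1, ⟨⟨by omega, by omega⟩, ?_⟩, by ring⟩)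
        rw [hrefl]; exact b4
      · subst h
        simp only [csucc, if_true] at b4
        omega
      · rcases b2.lt_or_eq with h2 | h2
        · rw [hcs i (by omega) h2] at b4
          exact Or.inl (Or.inl ⟨⟨by omega, h2⟩, b4⟩)
        · subst h2
          rw [hcn, hv.1] at b4
          exact Or.inr ⟨rfl, by omega⟩
    · rintro ((⟨⟨b1, b2⟩, b3⟩ | ⟨j, ⟨⟨b1, b2⟩, b3⟩, rfl⟩) | ⟨rfl, b⟩)
      · exact ⟨⟨by omega, by omega⟩, by omega, by rw [hcs i b1 b2]; exact b3⟩
      · refine ⟨⟨by omega, by omega⟩, by omega, ?_⟩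
        rw [hcs' _ (by omega), hrefl]; exact b3
      · exact ⟨⟨by omega, by omega⟩, by omega, by rw [hcn, hv.1]; omega⟩
  have hd1 : Disjoint A (A.image fun i => -i - 1) := by
    rw [Finset.disjoint_left]
    intro i hi hi'
    simp only [hA, Finset.mem_image, Finset.mem_filter, Finset.mem_Ico] at hi hi'
    obtain ⟨j, hj, hj'⟩ := hi'
    omega
  have hd2 : Disjoint (A ∪ A.image fun i => -i - 1)
      (if 0 < v n then ({(n : ℤ)} : Finset ℤ) else ∅) := by
    split_ifs
    · rw [Finset.disjoint_singleton_right]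
      simp only [hA, Finset.mem_union, Finset.mem_image, Finset.mem_filter, Finset.mem_Ico]
      rintro (h | ⟨j, hj, hj'⟩) <;> omega
    · simp
  have hAc : (A.card : ℤ) = wind v n := by
    unfold wind
    rw [Finset.Ico_eq_empty (a := (n : ℤ)) (b := 0) (by omega),
      ← Finset.insert_Ico_add_one_left_eq_Ico (a := (0 : ℤ)) (by omega),
      Finset.sum_insert (by simp), hA, Finset.card_filter]
    have : dsc v 0 = 0 := by unfold dsc; rw [zero_add, if_neg (by omega)]
    rw [this]
    simp [dsc]
  rw [cdes, hset, Finset.card_union_of_disjoint hd2, Finset.card_union_of_disjoint hd1,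
    Finset.card_image_of_injective _ (fun a b h => by simpa using h)]
  push_cast
  rw [hAc]
  split_ifs <;> simp <;> ring

/-- The slab containing the image of `(w, c)` is the one numbered `cdes(w⁻¹)`. -/
lemma Good.slab (hn : 1 ≤ n) (hw : InXn n w) (hc : Good n r w c) :
    1 ≤ cdes n w.symm ∧ InSlab (cdes n w.symm) r (∑ i : Fin n, stepY r w c i) := by
  have hsv := sp_symm hw.1
  rw [Fin.sum_univ_eq_sum_range (fun i : ℕ => stepY r w c i) n, hc.sum hw]
  have hcd := cdes_eq hn hsv hw.2
  have z1 : w.symm 0 = 0 := sp_zero hsv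
  have hm0 : 0 ≤ wind w.symm n := (wind_zero w.symm) ▸ wind_mono w.symm (show (0 : ℤ) ≤ n by omega)
  have bn := sp_mem hsv (i := n) (by omega) le_rfl
  have hb := hc.le_r hw.1 bn.1 bn.2
  set k := cdes n w.symm with hk
  set m := wind w.symm n with hm
  by_cases h : 0 < w.symm n
  · rw [if_pos h] at hcd
    have h0 := hc.mono hw.1 (p := 0) (by omega) h.le bn.2
    rw [hc.at_zero] at h0
    refine ⟨by omega, ?_⟩
    unfold InSlab
    split_ifs with h1
    · have : m = 0 := by omega
      rw [this]; simp; omega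
    · rw [hcd]
      -- a vanishing residue of `n` would force `n` to come after `0` without any winding
      have hpos : 0 < c (w.symm n) := by
        rcases h0.lt_or_eq with h2 | h2
        · exact h2
        · have h3 := hc.prec hw (by omega) h bn.2
          unfold Prec at h3
          simp only [Equiv.apply_symm_apply, sp_zero hw.1, z1, hc.at_zero, wind_zero] at h3
          omega
      constructor <;> nlinarith
  · rw [if_neg h] at hcd
    have hmpos : 0 < m := by
      rcases (show (1 : ℤ) ≤ n by omega).lt_or_eq with h2 | h2
      · have := wind_lt h2 (v := w.symm) (by have := hw.2; omega)
        rw [wind_one hw] at this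
        exact this
      · rw [← h2] at h
        exact absurd hw.2 h
    have h0 := hc.mono hw.1 bn.1 (not_lt.1 h) (by omega)
    rw [hc.at_zero] at h0
    refine ⟨by omega, ?_⟩
    unfold InSlab
    rw [if_neg (by omega), hcd]
    rcases hc.range hw (i := n) (by omega) le_rfl with h2 | h2
    · constructor <;> nlinarith
    · omega

end Forward
/-! ### Injectivity -/

/-- Residues in `(-r, r]` and winding numbers are determined by `z = t + 2 r m`. -/
lemma rep_unique {r : ℕ} {t m t' m' : ℤ}
    (h : (-(r : ℤ) < t ∧ t ≤ r) ∨ (r = 0 ∧ t = 0 ∧ m = 0))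
    (h' : (-(r : ℤ) < t' ∧ t' ≤ r) ∨ (r = 0 ∧ t' = 0 ∧ m' = 0))
    (e : t + 2 * r * m = t' + 2 * r * m') : t = t' ∧ m = m' := by
  rcases Nat.eq_zero_or_pos r with h0 | h0
  · omega
  · have hr : (0 : ℤ) < r := by omega
    have h1 := h.resolve_right (by omega)
    have h2 := h'.resolve_right (by omega)
    have hm : m = m' := by
      rcases lt_trichotomy m m' with h3 | h3 | h3
      · nlinarith [mul_le_mul_of_nonneg_left (show m + 1 ≤ m' by omega) hr.le]
      · exact h3
      · nlinarith [mul_le_mul_of_nonneg_left (show m' + 1 ≤ m by omega) hr.le]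
    subst hm
    exact ⟨by omega, rfl⟩

/-- Partial sums determine residues and winding numbers, these determine the tie-breaking order,
and the order determines `w`. -/
lemma Good.inj {n r : ℕ} {w w' : Equiv.Perm ℤ} {c c' : ℤ → ℤ} (hw : InXn n w)
    (hc : Good n r w c) (hw' : InXn n w') (hc' : Good n r w' c')
    (h : ∀ i : Fin n, stepY r w c i = stepY r w' c' i) : w = w' ∧ c = c' := by
  have hsv := sp_symm hw.1
  have hsv' := sp_symm hw'.1
  have hpos : ∀ i : ℤ, 1 ≤ i → i ≤ n → c (w.symm i) = c' (w'.symm i) ∧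
      wind w.symm i = wind w'.symm i := by
    intro i h1 h2
    apply rep_unique (hc.range hw h1 h2) (hc'.range hw' h1 h2)
    lift i to ℕ using by omega
    rw [← hc.sum hw, ← hc'.sum hw']
    apply Finset.sum_congr rfl
    intro j hj
    rw [Finset.mem_range] at hj
    exact h ⟨j, by omega⟩
  have hall : ∀ i : ℤ, -(n : ℤ) ≤ i → i ≤ n → c (w.symm i) = c' (w'.symm i) ∧
      wind w.symm i = wind w'.symm i := by
    intro i h1 h2
    rcases lt_trichotomy i 0 with h3 | h3 | h3
    · have := hpos (-i) (by omega) (by omega)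
      rw [hsv.1, hsv'.1, hc.odd, hc'.odd, wind_neg hsv, wind_neg hsv'] at this
      omega
    · subst h3
      simp [sp_zero hsv, sp_zero hsv', hc.at_zero, hc'.at_zero, wind_zero]
    · exact hpos i (by omega) h2
  have hv : w.symm = w'.symm := by
    apply sp_ext hsv hsv'
    intro i j hi hi' hj hj'
    rw [hc.prec_iff hw hi hi' hj hj', hc'.prec_iff hw' hi hi' hj hj']
    unfold Prec
    simp only [hall i hi hi', hall j hj hj']
  have hww : w = w' := by
    rw [← Equiv.symm_symm w, hv, Equiv.symm_symm]
  subst hww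
  refine ⟨rfl, funext fun p => ?_⟩
  by_cases hp : |p| ≤ n
  · obtain ⟨h1, h2⟩ := abs_le.1 hp
    have b := sp_mem hw.1 h1 h2
    simpa using (hall (w p) b.1 b.2).1
  · push Not at hp
    rcases lt_abs.1 hp with h1 | h1
    · rw [hc.zero p h1, hc'.zero p h1]
    · have e1 := hc.zero _ h1
      have e2 := hc'.zero _ h1
      rw [hc.odd] at e1
      rw [hc'.odd] at e2
      omega

/-! ### Surjectivity -/

/-- A strict total order on `[-n, n]` reversed by negation comes from a signed permutation. -/
lemma exists_sp (n : ℕ) {P : ℤ → ℤ → Prop} (htr : ∀ i j l, P i j → P j l → P i l)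
    (has : ∀ i j, P i j → ¬ P j i) (hto : ∀ i j, i ≠ j → P i j ∨ P j i)
    (hneg : ∀ i j, P (-i) (-j) ↔ P j i) :
    ∃ v : Equiv.Perm ℤ, IsSignedPerm n v ∧ ∀ i j : ℤ, -(n : ℤ) ≤ i → i ≤ n → -(n : ℤ) ≤ j →
      j ≤ n → (v i < v j ↔ P i j) := by
  set I := Finset.Icc (-(n : ℤ)) n with hI
  have hirr : ∀ i, ¬ P i i := fun i h => has i i h h
  let rk : ℤ → ℕ := fun i => (I.filter fun j => P j i).card
  have hlt : ∀ i j, i ∈ I → P i j → rk i < rk j := by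
    intro i j hi h
    apply Finset.card_lt_card
    rw [Finset.ssubset_iff_of_subset]
    · exact ⟨i, by simp [hi, h], by simp [hirr]⟩
    · intro l hl
      rw [Finset.mem_filter] at hl ⊢
      exact ⟨hl.1, htr _ _ _ hl.2 h⟩
  have hrkneg : ∀ i, i ∈ I → (rk (-i) : ℤ) + rk i = 2 * n := by
    intro i hi
    have e1 : rk (-i) = (I.filter fun j => P i j).card := by
      have : (I.filter fun j => P j (-i)) = (I.filter fun j => P i j).image (fun j => -j) := by
        ext a
        simp only [Finset.mem_image, Finset.mem_filter, hI, Finset.mem_Icc]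
        constructor
        · rintro ⟨h1, h2⟩
          refine ⟨-a, ⟨by omega, ?_⟩, by simp⟩
          rw [← hneg, neg_neg]; exact h2
        · rintro ⟨b, ⟨h1, h2⟩, rfl⟩
          exact ⟨by omega, (hneg _ _).2 h2⟩
      simp only [rk]
      rw [this, Finset.card_image_of_injective _ neg_injective]
    have e2 : I = insert i ((I.filter fun j => P i j) ∪ (I.filter fun j => P j i)) := by
      ext a
      simp only [Finset.mem_insert, Finset.mem_union, Finset.mem_filter]
      constructor
      · intro ha
        by_cases h : a = i
        · exact Or.inl h
        · rcases hto a i h with h1 | h1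
          · exact Or.inr (Or.inr ⟨ha, h1⟩)
          · exact Or.inr (Or.inl ⟨ha, h1⟩)
      · rintro (rfl | h | h)
        · exact hi
        · exact h.1
        · exact h.1
    have e3 := congrArg Finset.card e2
    rw [Finset.card_insert_of_notMem (by simp [hirr]), Finset.card_union_of_disjoint, ← e1] at e3
    · have hIc : I.card = 2 * n + 1 := by rw [hI, Int.card_Icc]; omega
      rw [hIc] at e3
      simp only [rk] at e3 ⊢
      omega
    · rw [Finset.disjoint_left]
      intro a ha ha'
      rw [Finset.mem_filter] at ha ha'
      exact has _ _ ha.2 ha'.2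
  let f : ℤ → ℤ := fun i => if i ∈ I then (rk i : ℤ) - n else i
  have hfI : ∀ i, i ∈ I → f i = rk i - n := fun i hi => if_pos hi
  have hfO : ∀ i, i ∉ I → f i = i := fun i hi => if_neg hi
  have hnI : ∀ i, -i ∈ I ↔ i ∈ I := by intro i; simp only [hI, Finset.mem_Icc]; omega
  have hmaps : ∀ i, i ∈ I → f i ∈ I := by
    intro i hi
    have := hrkneg i hi
    rw [hfI i hi, hI, Finset.mem_Icc]
    omega
  have hflt : ∀ i j, i ∈ I → j ∈ I → (f i < f j ↔ P i j) := by
    intro i j hi hj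
    rw [hfI i hi, hfI j hj]
    constructor
    · intro h
      by_contra hc
      have hne : i ≠ j := by rintro rfl; omega
      have := hlt j i hj ((hto i j hne).resolve_left hc)
      omega
    · intro h
      have := hlt i j hi h
      omega
  have hinj : Function.Injective f := by
    intro i j hij
    by_cases hi : i ∈ I <;> by_cases hj : j ∈ I
    · by_contra hne
      rcases hto i j hne with h | h
      · have := (hflt i j hi hj).2 h; omega
      · have := (hflt j i hj hi).2 h; omega
    · have := hmaps i hi; rw [hij, hfO j hj] at this; exact absurd this hj
    · have := hmaps j hj; rw [← hij, hfO i hi] at this; exact absurd this hi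
    · rwa [hfO i hi, hfO j hj] at hij
  have hsurj : Function.Surjective f := by
    intro a
    by_cases ha : a ∈ I
    · obtain ⟨i, _, hi⟩ := Finset.surjOn_of_injOn_of_card_le f (s := I) (t := I)
        (fun i hi => hmaps i hi) hinj.injOn le_rfl ha
      exact ⟨i, hi⟩
    · exact ⟨a, hfO a ha⟩
  have hbij : Function.Bijective f := ⟨hinj, hsurj⟩
  refine ⟨Equiv.ofBijective f hbij, ⟨fun i => ?_, fun i hi => ?_⟩, ?_⟩
  · simp only [Equiv.ofBijective_apply]
    by_cases hi : i ∈ I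
    · have := hrkneg i hi
      rw [hfI i hi, hfI (-i) ((hnI i).2 hi)]
      omega
    · rw [hfO i hi, hfO (-i) (by rwa [hnI])]
  · simp only [Equiv.ofBijective_apply]
    apply hfO
    rw [hI, Finset.mem_Icc]
    intro h
    exact absurd (abs_le.2 h) (by omega)
  · intro i j h1 h2 h3 h4
    simp only [Equiv.ofBijective_apply]
    exact hflt i j (Finset.mem_Icc.2 ⟨h1, h2⟩) (Finset.mem_Icc.2 ⟨h3, h4⟩)

/-- Surjectivity in terms of partial sums `Z`, split into residues `T` and winding numbers `M`:
sorting the indices by the tie-breaking order gives a signed permutation whose chain is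
`T` read in sorted order. -/
lemma exists_good {n r : ℕ} (hn : 1 ≤ n) {Z T M : ℤ → ℤ} (hT : ∀ i, T (-i) = - T i)
    (hM : ∀ i, M (-i) = - M i) (hZ : ∀ i, Z i = T i + 2 * r * M i) (hmono : Monotone Z)
    (hstep : ∀ i, Z (i + 1) - Z i ≤ 2 * r) (hone : Z 1 ≤ r)
    (hrange : ∀ i, 1 ≤ i → (-(r : ℤ) < T i ∧ T i ≤ r) ∨ (r = 0 ∧ T i = 0 ∧ M i = 0)) :
    ∃ w c, InXn n w ∧ Good n r w c ∧
      ∀ i : ℤ, 0 ≤ i → i < n → stepY r w c i = Z (i + 1) - Z i := by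
  have hT0 : T 0 = 0 := by have := hT 0; simp at this; omega
  have hM0 : M 0 = 0 := by have := hM 0; simp at this; omega
  have hZ0 : Z 0 = 0 := by rw [hZ, hT0, hM0]; ring
  obtain ⟨v, hv, hlt⟩ := exists_sp n (P := Prec T M) (fun _ _ _ => Prec.trans)
    (fun _ _ => Prec.asymm) (fun _ _ => prec_total) (fun _ _ => prec_neg hT hM)
  have hw := sp_symm hv
  have v0 : v 0 = 0 := sp_zero hv
  have hr0 : r = 0 → ∀ i, T i = 0 ∧ M i = 0 := by
    intro h0 i
    rcases lt_trichotomy i 0 with h | rfl | h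
    · have := hrange (-i) (by omega)
      rw [hT, hM] at this
      omega
    · exact ⟨hT0, hM0⟩
    · have := hrange i (by omega)
      omega
  have hTle : ∀ i, T i ≤ r := by
    intro i
    rcases lt_trichotomy i 0 with h | rfl | h
    · have := hrange (-i) (by omega)
      rw [hT] at this
      omega
    · omega
    · have := hrange i (by omega)
      omega
  let c : ℤ → ℤ := fun p => if |p| ≤ n then T (v.symm p) else 0
  have hcin : ∀ p, -(n : ℤ) ≤ p → p ≤ n → c p = T (v.symm p) := fun p h1 h2 =>
    if_pos (abs_le.2 ⟨h1, h2⟩)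
  have hcv : ∀ i, -(n : ℤ) ≤ i → i ≤ n → c (v i) = T i := by
    intro i h1 h2
    have b := sp_mem hv h1 h2
    rw [hcin _ b.1 b.2, Equiv.symm_apply_apply]
  have hadj : ∀ p q, -(n : ℤ) ≤ p → p < q → q ≤ n → Prec T M (v.symm p) (v.symm q) := by
    intro p q h1 h2 h3
    have b1 := sp_mem hw (i := p) h1 (by omega)
    have b2 := sp_mem hw (i := q) (by omega) h3
    rw [← hlt _ _ b1.1 b1.2 b2.1 b2.2]
    simpa using h2
  -- positive indices with equal partial sums have the same residue and winding number
  have hsame : ∀ i j, 1 ≤ i → 1 ≤ j → Z i = Z j → T i = T j ∧ M i = M j := by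
    intro i j h1 h2 h
    rw [hZ, hZ] at h
    exact rep_unique (hrange i h1) (hrange j h2) h
  have hZneg : ∀ i, Z (-i) = - Z i := by intro i; rw [hZ, hZ, hT, hM]; ring
  have hbig : ∀ p, -(n : ℤ) ≤ p → p < n → T (v.symm p) = T (v.symm (p + 1)) →
      ¬ Lll (v.symm p) (v.symm (p + 1)) := by
    rintro p h1 h2 hTeq ⟨l, hl0, hl1, hl2⟩
    have b1 := sp_mem hw (i := p) h1 (by omega)
    have b2 := sp_mem hw (i := p + 1) (by omega) (by omega)
    have hp := hadj p (p + 1) h1 (by omega) (by omega)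
    set i := v.symm p with hi
    set j := v.symm (p + 1) with hj
    have hle : Z i ≤ Z j := hmono (by omega)
    have hMeq : M i = M j := by
      rcases Nat.eq_zero_or_pos r with h0 | h0
      · rw [(hr0 h0 i).2, (hr0 h0 j).2]
      · unfold Prec at hp
        by_contra hne
        have hgt : M j < M i := by omega
        rw [hZ, hZ] at hle
        nlinarith
    have hZeq : Z i = Z j := by rw [hZ, hZ, hTeq, hMeq]
    have hZil : Z i ≤ Z l := hmono hl1.le
    have hZlj : Z l ≤ Z j := hmono hl2.le
    -- an index `l` strictly between would be sorted strictly between two neighbours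
    have hl : T l = T i ∧ M l = M i := by
      rcases lt_or_gt_of_ne hl0 with h | h
      · have := hsame (-l) (-i) (by omega) (by omega) (by rw [hZneg, hZneg]; omega)
        rw [hT, hT, hM, hM] at this
        omega
      · have := hsame l j (by omega) (by omega) (by omega)
        omega
    have p1 : Prec T M i l := by unfold Prec; omega
    have p2 : Prec T M l j := by unfold Prec; omega
    rw [← hlt _ _ b1.1 b1.2 (by omega) (by omega), hi, Equiv.apply_symm_apply] at p1
    rw [← hlt _ _ (by omega) (by omega) b2.1 b2.2, hj, Equiv.apply_symm_apply] at p2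
    omega
  have hZ1 : T 1 = Z 1 ∧ M 1 = 0 := by
    have h0 : Z 0 ≤ Z 1 := hmono (by omega)
    refine rep_unique (hrange 1 le_rfl) ?_ (by rw [← hZ]; ring)
    omega
  refine ⟨v.symm, c, ⟨hw, ?_⟩, ⟨?_, ?_, ?_⟩, ?_⟩
  · rw [Equiv.symm_symm]
    have h0 : Z 0 ≤ Z 1 := hmono (by omega)
    have := (hlt 0 1 (by omega) (by omega) (by omega) (by omega)).2 (by unfold Prec; omega)
    omega
  · intro p
    simp only [c, abs_neg]
    split_ifs
    · rw [hw.1, hT]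
    · simp
  · intro p hp
    simp only [c]
    rw [if_neg]
    intro h
    have := (abs_le.1 h).2
    omega
  · intro q h0 hq
    rcases hq.lt_or_eq with h | h
    · have e1 := hcin q (by omega) hq
      have e2 := hcin (q + 1) (by omega) (by omega)
      have hp := hadj q (q + 1) (by omega) (by omega) (by omega)
      have hb := hbig q (by omega) h
      unfold gap Big
      rw [if_neg h.ne, if_neg h.ne, e1, e2]
      unfold Prec at hp
      split_ifs with hL
      · have : T (v.symm q) ≠ T (v.symm (q + 1)) := fun h => hb h hL
        omega
      · omega
    · subst h
      unfold gap Big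
      rw [if_pos rfl, if_pos rfl, hcin n (by omega) le_rfl]
      have hle := hTle (v.symm n)
      split_ifs with hb
      · have b := sp_mem hw (i := n) (by omega) le_rfl
        have hne : T (v.symm n) ≠ r := by
          intro hcon
          have hr := hrange (-v.symm n) (by omega)
          rw [hT] at hr
          have hr00 : r = 0 := by omega
          have t1 := hr0 hr00 (v.symm n)
          have t2 := hr0 hr00 n
          have p1 : Prec T M (v.symm n) n := by unfold Prec; omega
          rw [← hlt _ _ b.1 b.2 (by omega) le_rfl, Equiv.apply_symm_apply] at p1
          have := (sp_mem hv (i := n) (by omega) le_rfl).2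
          omega
        omega
      · omega
  · intro i h0 hi
    unfold stepY dsc
    rw [Equiv.symm_symm, hcv i (by omega) hi.le, hcv (i + 1) (by omega) (by omega), hZ, hZ]
    rcases Nat.eq_zero_or_pos r with hr | hr
    · subst hr; simp
    have hTi : -(r : ℤ) < T i := by
      rcases h0.lt_or_eq with h | h
      · have := hrange i (by omega); omega
      · rw [← h, hT0]; omega
    have hTi1 : -(r : ℤ) < T (i + 1) := by
      have := hrange (i + 1) (by omega); omega
    have hTi' := hTle i
    have hTi1' := hTle (i + 1)
    have hs := hstep i
    have hs0 : Z i ≤ Z (i + 1) := hmono (by omega)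
    rw [hZ, hZ] at hs hs0
    have hiff := hlt (i + 1) i (by omega) (by omega) (by omega) (by omega)
    have hrr : (0 : ℤ) < r := by omega
    have key : M (i + 1) - M i = if v (i + 1) < v i then 1 else 0 := by
      split_ifs with h
      · have hp := hiff.1 h
        unfold Prec at hp
        have lo : M i < M (i + 1) := by
          rcases hp with h1 | h1
          · by_contra hcon; nlinarith
          · omega
        have hi2 : M (i + 1) < M i + 2 := by
          by_contra hcon; nlinarith
        omega
      · have hp : ¬ Prec T M (i + 1) i := fun h' => h (hiff.2 h')
        unfold Prec at hp
        push Not at hp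
        have lo : M i ≤ M (i + 1) := by
          by_contra hcon; nlinarith
        have hi2 : M (i + 1) ≤ M i := by
          rcases hp.1.lt_or_eq with h1 | h1
          · by_contra hcon; nlinarith
          · exact (hp.2 h1.symm).1
        omega
    rw [← key]
    ring

/-- Every box point comes from some `(w, c)`: its partial sums, extended to an odd function on `ℤ`,
are split into residues modulo `2r` and winding numbers. -/
lemma exists_good_of_box {n r : ℕ} (hn : 1 ≤ n) {y : Fin n → ℤ} (hy : InBox n r y) :
    ∃ w c, InXn n w ∧ Good n r w c ∧ ∀ i : Fin n, stepY r w c i = y i := by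
  let Y : ℕ → ℤ := fun i => if h : i < n then y ⟨i, h⟩ else 0
  have hY0 : ∀ i, 0 ≤ Y i := by
    intro i; simp only [Y]; split_ifs with h
    · exact (hy.1 _).1
    · rfl
  have hY2 : ∀ i, Y i ≤ 2 * r := by
    intro i; simp only [Y]; split_ifs with h
    · exact (hy.1 _).2
    · omega
  let S : ℕ → ℤ := fun m => ∑ i ∈ Finset.range m, Y i
  have hS : ∀ m, S (m + 1) = S m + Y m := fun m => Finset.sum_range_succ _ _
  have hS0 : S 0 = 0 := by simp [S]
  let Z : ℤ → ℤ := fun i => S i.toNat - S (-i).toNat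
  have hZstep : ∀ i : ℤ, ∃ m, Z (i + 1) - Z i = Y m ∧ (0 ≤ i → (m : ℤ) = i) := by
    intro i
    rcases le_or_gt 0 i with h | h
    · refine ⟨i.toNat, ?_, by omega⟩
      simp only [Z]
      rw [show (i + 1).toNat = i.toNat + 1 by omega, show (-(i + 1)).toNat = 0 by omega,
        show (-i).toNat = 0 by omega, hS]
      ring
    · refine ⟨(-(i + 1)).toNat, ?_, by omega⟩
      simp only [Z]
      rw [show (-i).toNat = (-(i + 1)).toNat + 1 by omega, show (i + 1).toNat = 0 by omega,
        show i.toNat = 0 by omega, hS]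
      ring
  have hZ0 : Z 0 = 0 := by simp [Z]
  have hZodd : ∀ i, Z (-i) = - Z i := by intro i; simp [Z]
  have hmono : Monotone Z := monotone_int_of_le_succ fun i => by
    obtain ⟨m, h, _⟩ := hZstep i
    have := hY0 m
    omega
  have hZ2 : ∀ i, Z (i + 1) - Z i ≤ 2 * r := fun i => by
    obtain ⟨m, h, _⟩ := hZstep i
    rw [h]; exact hY2 m
  have hZr0 : r = 0 → ∀ i, Z i = 0 := by
    intro h0 i
    have hanti : Antitone Z := antitone_int_of_succ_le fun i => by have := hZ2 i; omega
    rcases le_total 0 i with h | h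
    · have := hmono h; have := hanti h; omega
    · have := hmono h; have := hanti h; omega
  -- `r - z` modulo `2r` lies in `[0, 2r)`, which places the residue of `z` in `(-r, r]`
  let mp : ℤ → ℤ := fun z => -((r - z) / (2 * r))
  have hmp0 : mp 0 = 0 := by
    simp only [mp, sub_zero, neg_eq_zero]
    rcases Nat.eq_zero_or_pos r with h | h
    · simp [h]
    · exact Int.ediv_eq_zero_of_lt (by omega) (by omega)
  have hmp : 0 < r → ∀ z, -(r : ℤ) < z - 2 * r * mp z ∧ z - 2 * r * mp z ≤ r := by
    intro h z
    have e := Int.emod_add_mul_ediv (r - z) (2 * r)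
    have l := Int.emod_nonneg (r - z) (show (2 * r : ℤ) ≠ 0 by omega)
    have u := Int.emod_lt_of_pos (r - z) (show 0 < (2 * r : ℤ) by omega)
    simp only [mp, mul_neg]
    constructor <;> linarith
  let M : ℤ → ℤ := fun i => if 0 ≤ i then mp (Z i) else - mp (Z (-i))
  have hM : ∀ i, M (-i) = - M i := by
    intro i
    simp only [M]
    rcases lt_trichotomy i 0 with h | rfl | h
    · rw [if_pos (by omega), if_neg (by omega), neg_neg]
    · simp [hZ0, hmp0]
    · rw [if_neg (by omega), if_pos (by omega), neg_neg i]
  obtain ⟨w, c, hw, hc, hs⟩ := exists_good (n := n) (r := r) hn (Z := Z)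
    (T := fun i => Z i - 2 * r * M i) (M := M)
    (fun i => by simp only [hZodd, hM]; ring) hM (fun i => by ring) hmono hZ2
    (by
      obtain ⟨m, h, hm⟩ := hZstep 0
      have hm0 : m = 0 := by have := hm le_rfl; omega
      subst hm0
      rw [zero_add, hZ0, sub_zero] at h
      rw [h]
      simp only [Y]
      rw [dif_pos (by omega)]
      exact hy.2 _ rfl)
    (by
      intro i hi
      rcases Nat.eq_zero_or_pos r with h | h
      · right
        have hMi : M i = 0 := by
          simp only [M]
          rw [if_pos (by omega), hZr0 h, hmp0]
        exact ⟨h, by simp [hMi, hZr0 h], hMi⟩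
      · left
        simp only [M]
        rw [if_pos (by omega)]
        exact hmp h _)
  refine ⟨w, c, hw, hc, fun i => ?_⟩
  have hi := i.2
  rw [hs i (by omega) (by omega)]
  obtain ⟨m, h, hm⟩ := hZstep i
  have hmi : m = i := by have := hm (by omega); omega
  rw [h, hmi]
  simp [Y]

/-! ### Counting chains -/

lemma basc_eq {n : ℕ} (hn : 1 ≤ n) {w : Equiv.Perm ℤ} (hw : IsSignedPerm n w) :
    basc n w = ∑ q ∈ Finset.range (n + 1), if Big n w q then 1 else 0 := by
  rw [← Finset.card_filter, basc]
  have h0 : Lll 0 (w 1) ↔ 2 ≤ w 1 := by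
    constructor
    · rintro ⟨a, h⟩; omega
    · intro h; exact ⟨1, by omega⟩
  have hw0 := sp_zero hw
  apply Finset.card_bij' (fun (i : ℤ) _ => if i = -1 then 0 else i.toNat)
    (fun (q : ℕ) _ => if q = 0 then -1 else (q : ℤ))
  · intro i hi
    simp only [Finset.mem_filter, Finset.mem_insert, Finset.mem_Icc, Finset.mem_range] at hi ⊢
    by_cases h : i = -1
    · subst h
      simp only [if_true] at hi ⊢
      refine ⟨by omega, ?_⟩
      unfold Big
      rw [if_neg (by push_cast; omega)]
      simpa [hw0, h0] using hi.2
    · rw [if_neg h] at hi ⊢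
      refine ⟨by omega, ?_⟩
      unfold Big
      rw [show ((i.toNat : ℕ) : ℤ) = i by omega]
      exact hi.2
  · intro q hq
    simp only [Finset.mem_filter, Finset.mem_insert, Finset.mem_Icc, Finset.mem_range] at hq ⊢
    obtain ⟨h1, h2⟩ := hq
    unfold Big at h2
    by_cases h : q = 0
    · subst h
      rw [if_neg (by push_cast; omega)] at h2
      simpa [hw0, h0] using h2
    · rw [if_neg h, if_neg (by omega)]
      exact ⟨by omega, h2⟩
  · intro i hi
    simp only [Finset.mem_filter, Finset.mem_insert, Finset.mem_Icc] at hi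
    by_cases h : i = -1
    · simp [h]
    · rw [if_neg h, if_neg (by omega)]
      omega
  · intro q hq
    by_cases h : q = 0
    · simp [h]
    · rw [if_neg h, if_neg (by omega)]
      simp

/-- Stars and bars. -/
lemma card_comp (n r b : ℕ) (hn : 1 ≤ n) :
    Nat.card {h : Fin (n + 1) → ℕ // ∑ q, h q + b = r} = Nat.choose (n + r - b) n := by
  by_cases hb : b ≤ r
  · have e : {h : Fin (n + 1) → ℕ // ∑ q, h q + b = r} ≃ Sym (Fin (n + 1)) (r - b) :=
      (Equiv.subtypeEquivRight fun h => by omega).trans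
        (Sym.equivNatSumOfFintype (Fin (n + 1)) (r - b)).symm
    rw [Nat.card_congr e, Nat.card_eq_fintype_card, Sym.card_sym_eq_choose, Fintype.card_fin]
    rw [show n + 1 + (r - b) - 1 = n + (r - b) by omega, show n + r - b = n + (r - b) by omega]
    exact (Nat.choose_symm_add).symm
  · have : IsEmpty {h : Fin (n + 1) → ℕ // ∑ q, h q + b = r} := ⟨fun h => by
      have := h.2; omega⟩
    rw [Nat.card_of_isEmpty, Nat.choose_eq_zero_of_lt (by omega)]

/-- The chains of `w` are counted by recording the gaps, each diminished by its forced strictness. -/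
lemma card_good {n : ℕ} (r : ℕ) (hn : 1 ≤ n) {w : Equiv.Perm ℤ} (hw : IsSignedPerm n w) :
    Nat.card {c : ℤ → ℤ // Good n r w c} = Nat.choose (n + r - basc n w) n := by
  rw [← card_comp n r _ hn]
  set e : ℕ → ℕ := fun q => if Big n w q then 1 else 0 with he
  have hbe : basc n w = ∑ q ∈ Finset.range (n + 1), e q := basc_eq hn hw
  have hge : ∀ c, Good n r w c → ∀ q : ℕ, q ≤ n → (e q : ℤ) ≤ gap n r c q := by
    intro c hc q hq
    have := hc.gap_le q (by omega) (by omega)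
    simp only [he]
    split_ifs with h
    · rw [if_pos h] at this; exact_mod_cast this
    · rw [if_neg h] at this; exact_mod_cast this
  have hsum : ∀ c, Good n r w c → ∑ q ∈ Finset.range (n + 1), gap n r c q = r := by
    intro c hc
    rw [Finset.sum_range_succ]
    have h1 : ∀ q ∈ Finset.range n, gap n r c q = c ((q + 1 : ℕ) : ℤ) - c (q : ℤ) := by
      intro q hq
      rw [Finset.mem_range] at hq
      unfold gap
      rw [if_neg (by omega)]
      push_cast
      rfl
    rw [Finset.sum_congr rfl h1, Finset.sum_range_sub (fun q : ℕ => c q)]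
    unfold gap
    rw [if_pos rfl]
    simp [hc.at_zero]
  let F : {c : ℤ → ℤ // Good n r w c} → {h : Fin (n + 1) → ℕ // ∑ q, h q + basc n w = r} :=
    fun c => ⟨fun q => (gap n r c.1 (q : ℕ) - e q).toNat, by
      rw [hbe, Fin.sum_univ_eq_sum_range (fun q : ℕ => (gap n r c.1 q - e q).toNat) (n + 1),
        ← Finset.sum_add_distrib]
      zify
      rw [← hsum c.1 c.2]
      apply Finset.sum_congr rfl
      intro q hq
      rw [Finset.mem_range] at hq
      have := hge c.1 c.2 q (by omega)
      omega⟩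
  apply Nat.card_eq_of_bijective F
  constructor
  · rintro ⟨c, hc⟩ ⟨c', hc'⟩ hF
    have hgap : ∀ q : ℕ, q ≤ n → gap n r c q = gap n r c' q := by
      intro q hq
      have h1 := congrFun (congrArg Subtype.val hF) ⟨q, by omega⟩
      simp only [F] at h1
      have := hge c hc q hq
      have := hge c' hc' q hq
      omega
    have hnat : ∀ p : ℕ, p ≤ n → c p = c' p := by
      intro p
      induction p with
      | zero => intro _; simp [hc.at_zero, hc'.at_zero]
      | succ p ih =>
        intro hp
        have h1 := hgap p (by omega)
        have h2 := ih (by omega)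
        unfold gap at h1
        rw [if_neg (by omega), if_neg (by omega)] at h1
        push_cast
        omega
    have hnn : ∀ p : ℤ, 0 ≤ p → c p = c' p := by
      intro p hp
      rcases le_or_gt p n with h | h
      · lift p to ℕ using hp
        exact hnat p (by omega)
      · rw [hc.zero p h, hc'.zero p h]
    apply Subtype.ext
    funext p
    rcases le_or_gt 0 p with h | h
    · exact hnn p h
    · have := hnn (-p) (by omega)
      rw [hc.odd, hc'.odd] at this
      simpa using this
  · rintro ⟨h, hh⟩
    let G : ℕ → ℤ := fun q => if hq : q < n + 1 then (h ⟨q, hq⟩ : ℤ) + e q else 0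
    let C : ℕ → ℤ := fun p => ∑ q ∈ Finset.range p, G q
    have hC : ∀ p, C (p + 1) = C p + G p := fun p => Finset.sum_range_succ _ _
    have hCr : C (n + 1) = r := by
      simp only [C]
      rw [← hh, hbe, ← Fin.sum_univ_eq_sum_range, ← Fin.sum_univ_eq_sum_range,
        ← Finset.sum_add_distrib]
      push_cast
      apply Finset.sum_congr rfl
      intro q _
      simp only [G]
      rw [dif_pos q.2]
    let c : ℤ → ℤ := fun p => if |p| ≤ n then C p.toNat - C (-p).toNat else 0
    have hcn : ∀ p : ℕ, p ≤ n → c p = C p := by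
      intro p hp
      simp only [c]
      rw [if_pos (by rw [abs_of_nonneg] <;> omega)]
      simp [C]
    have hgapG : ∀ q : ℕ, q ≤ n → gap n r c q = G q := by
      intro q hq
      unfold gap
      rcases hq.lt_or_eq with h1 | h1
      · have := hcn (q + 1) (by omega)
        push_cast at this
        rw [if_neg (by omega), this, hcn q hq, hC]
        ring
      · subst h1
        rw [if_pos rfl, hcn q le_rfl, ← hCr, hC]
        ring
    have hgood : Good n r w c := by
      refine ⟨fun p => ?_, fun p hp => ?_, fun q h0 hq => ?_⟩
      · simp only [c, abs_neg]
        split_ifs <;> simp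
      · simp only [c]
        rw [if_neg]
        intro h
        have := (abs_le.1 h).2
        omega
      · lift q to ℕ using h0
        rw [hgapG q (by omega)]
        simp only [G, he]
        rw [dif_pos (by omega)]
        split_ifs <;> simp
    refine ⟨⟨c, hgood⟩, Subtype.ext (funext fun q => ?_)⟩
    have hq := q.2
    simp only [F]
    rw [hgapG q (by omega)]
    simp only [G]
    rw [dif_pos hq]
    simp

lemma Lp_eq (n k r : ℕ) :
    Lp n k r = Nat.card {y : Fin n → ℤ // InBox n r y ∧ InSlab k r (∑ j, y j)} := by
  unfold Lp InBox InSlab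
  split_ifs with h
  · rw [← Nat.card_coe_set_eq]
    apply Nat.card_congr (Equiv.subtypeEquivRight fun y => ?_)
    simp only [Set.mem_ofPred_eq, and_assoc]
  · rw [← Nat.card_coe_set_eq]
    apply Nat.card_congr (Equiv.subtypeEquivRight fun y => ?_)
    simp only [Set.mem_ofPred_eq, and_assoc]

/-! ### The counting identity -/

/-- Theorem A. For `n ≥ 1`, `k ≥ 1` and every `r ≥ 0`, the number of
half-integer lattice points of the `r`-th dilate of `Δ'_{C_n,k}` equals
`Σ_{w ∈ X_n, cdes(w⁻¹) = k} C(n + r - basc(w), n)`; equivalently,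
`h*_{Δ'_{C_n,k}}(t) = Σ_{w ∈ X_n, cdes(w⁻¹) = k} t^{basc(w)}`. -/
theorem hstar_half_open_cdes_basc (n k : ℕ) (hn : 1 ≤ n) (hk : 1 ≤ k) (r : ℕ) :
    Lp n k r = ∑ᶠ w ∈ {w : Equiv.Perm ℤ | InXn n w ∧ cdes n w.symm = k},
      Nat.choose (n + r - basc n w) n := by
  have hfin : Finite {w : Equiv.Perm ℤ | InXn n w ∧ cdes n w.symm = k} :=
    Finite.of_injective
      (fun w => (⟨w.1, w.2.1.1⟩ : {w : Equiv.Perm ℤ // IsSignedPerm n w}))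
      fun a b h => Subtype.ext (by simpa using h)
  have := Fintype.ofFinite {w : Equiv.Perm ℤ | InXn n w ∧ cdes n w.symm = k}
  rw [← finsum_set_coe_eq_finsum_mem, finsum_eq_sum_of_fintype]
  have hcard : ∀ w : {w : Equiv.Perm ℤ | InXn n w ∧ cdes n w.symm = k},
      Nat.choose (n + r - basc n w) n = Nat.card {c : ℤ → ℤ // Good n r w c} :=
    fun w => (card_good r hn w.2.1.1).symm
  have hfin' : ∀ w : {w : Equiv.Perm ℤ | InXn n w ∧ cdes n w.symm = k},
      Finite {c : ℤ → ℤ // Good n r w c} := by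
    intro w
    -- chains inject into functions from a finite set to a finite set
    let F : {c : ℤ → ℤ // Good n r w c} →
        (Set.Icc (-(n : ℤ)) n → Set.Icc (-(r : ℤ)) r) :=
      fun c p => ⟨c.1 p.1, c.2.le_r w.2.1.1 p.2.1 p.2.2⟩
    apply Finite.of_injective F
    intro c c' hF
    apply Subtype.ext
    have key : ∀ p : ℤ, -(n : ℤ) ≤ p → p ≤ n → c.1 p = c'.1 p := fun p h1 h2 =>
      congrArg Subtype.val (congrFun hF ⟨p, h1, h2⟩)
    refine (c.2.inj w.2.1 w.2.1 c'.2 fun i => ?_).2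
    have hi := i.2
    have b1 := sp_mem (sp_symm w.2.1.1) (i := (i : ℤ)) (by omega) (by omega)
    have b2 := sp_mem (sp_symm w.2.1.1) (i := (i : ℤ) + 1) (by omega) (by omega)
    unfold stepY
    rw [key _ b1.1 b1.2, key _ b2.1 b2.2]
  rw [Finset.sum_congr rfl fun w _ => hcard w, ← Nat.card_sigma, Lp_eq]
  symm
  let Φ : (Σ w : {w : Equiv.Perm ℤ | InXn n w ∧ cdes n w.symm = k},
      {c : ℤ → ℤ // Good n r w c}) →
      {y : Fin n → ℤ // InBox n r y ∧ InSlab k r (∑ j, y j)} :=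
    fun x => ⟨fun i => stepY r x.1 x.2.1 i, x.2.2.box x.1.2.1, by
      have := (x.2.2.slab hn x.1.2.1).2
      rwa [x.1.2.2] at this⟩
  apply Nat.card_eq_of_bijective Φ
  constructor
  · rintro ⟨⟨w, hw⟩, ⟨c, hc⟩⟩ ⟨⟨w', hw'⟩, ⟨c', hc'⟩⟩ h
    obtain ⟨rfl, rfl⟩ := hc.inj hw.1 hw'.1 hc' fun i => congrFun (congrArg Subtype.val h) i
    rfl
  · rintro ⟨y, hy, hs⟩
    obtain ⟨w, c, hw, hc, h⟩ := exists_good_of_box hn hy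
    have hsl := hc.slab hn hw
    rw [Finset.sum_congr rfl fun i _ => h i] at hsl
    exact ⟨⟨⟨w, hw, hsl.2.unique hsl.1 hk hs⟩, ⟨c, hc⟩⟩, Subtype.ext (funext h)⟩
end

section
/- For all n ≥ 1 and k ≥ 1, #{w ∈ X_n : fexc(w) = k−1} = #{w ∈ X_n : cdes(w⁻¹) = k}. (Both quantities equal the normalized volume of the type C hypersimplex Δ_{C_n,k}; in particular the statistics fexc + 1 and w ↦ cdes(w⁻¹) are equidistributed on X_n.) -/
/-!
Both statistics are governed by the polynomial `(1 + X) ^ (n - 1) * H n`, where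
`H n = ∑ π ∈ S_n, X ^ exc π` is the Eulerian polynomial: the left-hand side of the theorem is its
coefficient at `X ^ (k - 1)`, and so is the right-hand side.

*Flag excedances.* Write `w ∈ X_n` as a permutation `π` of the absolute values together with a sign
at each position; membership in `X_n` forces the sign of the entry `±1` to be positive and leaves
the other signs free. A position contributes `1` to `fexc` if its sign is negative, and `2` or `0`
if it is positive, according to whether `π` has an excedance there. Summing over the signs gives
the factor `X + X ^ 2 = X * (1 + X)` at an excedance of `π`, the factor `1 + X` at each
non-excedance other than the position of `±1`, and `1` at that position, which is never an
excedance (`sum_fe`, `ncard_fexc`).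

*Circular descents.* For `u = w⁻¹` the circular word is `u₁ ⋯ u_n (-u_n) ⋯ (-u_1)`, so
`cdes u = 2 * des (u₁ ⋯ u_n) + [0 < u_n] + [u_1 < 0]` (`cdes_eq`). Words of length `n + 1` arise
from words of length `n` by inserting `n + 1` or `-(n + 1)` in one of the `n + 1` places, and of
these `2 * (n + 1)` insertions exactly `c = cdes u` keep the value of `cdes`, two raise it by `1`
and `2 * n - c` raise it by `2` (`sum_insert_stD`). An insertion at the front may change the sign
of the first letter; keeping track of that sign gives a pair of coupled recurrences for the
generating functions `Gp` (first letter positive) and `Gm` (first letter negative), namely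
`sum_insert_wP` and `sum_insert_wM`.

*Comparison.* Together with the recurrence
`H (n + 1) = (1 + n X) H n + X (1 - X) (H n)'` (`H_rec`), induction gives
`Gp (n + 1) = Gm (n + 1) = X * (1 + X) ^ n * H (n + 1)` (`G_eq`).
-/

open scoped Classical

open Polynomial

/-! ### The insertion recurrence for circular descents -/

/-- `stD a l` is twice the number of descents of the word `a :: l`, plus `1` if its last letter is
positive. -/
def stD : ℤ → List ℤ → ℕ
  | a, [] => if 0 < a then 1 else 0
  | a, b :: l => (if b < a then 2 else 0) + stD b l

/-- `2 * des + [last letter positive] + [first letter negative]`: the circular descent number of the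
signed permutation with window `l`, when `l` is nonempty. -/
def stC : List ℤ → ℕ
  | [] => 0
  | b :: l => (if b < 0 then 1 else 0) + stD b l

/-- The windows of the signed permutations of length `n`, built by inserting the letters `±1, …, ±n`
one after the other. -/
def SB : ℕ → List (List ℤ)
  | 0 => [[]]
  | n + 1 => (SB n).flatMap fun l =>
      List.permutations'Aux ((n : ℤ) + 1) l ++ List.permutations'Aux (-((n : ℤ) + 1)) l

/-- The insertion count with the letter `a` in front kept fixed: among the `2 * (length l + 1)`
insertions of `±N` behind `a`, exactly `stD a l` keep the statistic, one raises it by `1` and the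
other ones raise it by `2`. Either letter inserted in an ascent adds a descent and in a descent adds
none; at the end of the word, `N` and `-N` leave total contributions `1` and `2`. -/
theorem sum_insert_stD (N : ℤ) (l : List ℤ) : ∀ a : ℤ, |a| < N → (∀ x ∈ l, |x| < N) →
    ((List.permutations'Aux N l ++ List.permutations'Aux (-N) l).map
        fun l' => (X : ℤ[X]) ^ stD a l').sum
      = X ^ stD a l * ((stD a l : ℤ[X]) + X
          + (2 * (l.length : ℤ[X]) + 1 - (stD a l : ℤ[X])) * X ^ 2) := by
  induction l with
  | nil =>
    intro a ha _
    rw [abs_lt] at ha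
    have h1 : ¬ N < a := by omega
    have h2 : -N < a := by omega
    have h3 : 0 < N := by omega
    have h4 : ¬ N < 0 := by omega
    by_cases h : 0 < a <;> simp [List.permutations'Aux, stD, h1, h2, h3, h4, h]
    ring
  | cons b l ih =>
    intro a ha hl
    have hb := hl b (by simp)
    have ih' := ih b hb (fun x hx => hl x (by simp [hx]))
    rw [abs_lt] at ha hb
    have h1 : ¬ N < a := by omega
    have h2 : -N < a := by omega
    have h3 : b < N := by omega
    have h4 : ¬ b < -N := by omega
    simp only [List.map_append, List.sum_append] at ih' ⊢
    simp only [List.permutations'Aux, List.map_cons, List.sum_cons, List.map_map,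
      Function.comp_def, stD, h1, h2, h3, h4, if_true, if_false, pow_add,
      List.sum_map_mul_left, List.length_cons]
    by_cases h : b < a <;> simp only [h, if_true, if_false] <;> push_cast
    · linear_combination X ^ 2 * ih'
    · linear_combination ih'

/-- The weight `X ^ stC l` of a window with positive first letter, and `0` for the other windows. -/
noncomputable def wP (l : List ℤ) : ℤ[X] := if 0 < l.headD 0 then X ^ stC l else 0

/-- The weight `X ^ stC l` of a window with negative first letter, and `0` for the other windows. -/
noncomputable def wM (l : List ℤ) : ℤ[X] := if l.headD 0 < 0 then X ^ stC l else 0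

/-- Among the words obtained from `b :: l` by inserting `±N`, those with positive first letter. The
last term comes from `N` inserted in front of a negative letter. -/
theorem sum_insert_wP (N b : ℤ) (l : List ℤ) (hb0 : b ≠ 0) (h : ∀ x ∈ b :: l, |x| < N) :
    ((List.permutations'Aux N (b :: l) ++ List.permutations'Aux (-N) (b :: l)).map wP).sum
      = (stC (b :: l) : ℤ[X]) * wP (b :: l) + X * wP (b :: l)
        + (2 * ((b :: l).length : ℤ[X]) - (stC (b :: l) : ℤ[X])) * (X ^ 2 * wP (b :: l))
        + X * wM (b :: l) := by
  have hb := h b (by simp)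
  have ih := sum_insert_stD N l b hb (fun x hx => h x (by simp [hx]))
  rw [abs_lt] at hb
  have h3 : b < N := by omega
  have h5 : 0 < N := by omega
  have h6 : ¬ N < 0 := by omega
  simp only [List.map_append, List.sum_append] at ih ⊢
  rcases lt_or_gt_of_ne hb0 with hb1 | hb1
  · have hb2 : ¬ 0 < b := by omega
    simp [List.permutations'Aux, Function.comp_def, wP, wM, stC, stD, hb1, hb2, h3, h5, h6]
    ring
  · have hb2 : ¬ b < 0 := by omega
    simp [List.permutations'Aux, Function.comp_def, wP, wM, stC, stD, hb1, hb2, h3, h5, h6]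
    linear_combination ih

/-- Among the words obtained from `b :: l` by inserting `±N`, those with negative first letter. The
last term comes from `-N` inserted in front of a positive letter. -/
theorem sum_insert_wM (N b : ℤ) (l : List ℤ) (hb0 : b ≠ 0) (h : ∀ x ∈ b :: l, |x| < N) :
    ((List.permutations'Aux N (b :: l) ++ List.permutations'Aux (-N) (b :: l)).map wM).sum
      = (stC (b :: l) : ℤ[X]) * wM (b :: l) + X * wM (b :: l)
        + (2 * ((b :: l).length : ℤ[X]) - (stC (b :: l) : ℤ[X])) * (X ^ 2 * wM (b :: l))
        + X * wP (b :: l) := by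
  have hb := h b (by simp)
  have ih := sum_insert_stD N l b hb (fun x hx => h x (by simp [hx]))
  rw [abs_lt] at hb
  have h4 : ¬ b < -N := by omega
  have h5 : 0 < N := by omega
  have h6 : ¬ N < 0 := by omega
  simp only [List.map_append, List.sum_append] at ih ⊢
  rcases lt_or_gt_of_ne hb0 with hb1 | hb1
  · have hb2 : ¬ 0 < b := by omega
    simp [List.permutations'Aux, Function.comp_def, wP, wM, stC, stD, hb1, hb2, h4, h5, h6,
      pow_add, List.sum_map_mul_left]
    linear_combination X * ih
  · have hb2 : ¬ b < 0 := by omega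
    simp [List.permutations'Aux, Function.comp_def, wP, wM, stC, stD, hb1, hb2, h4, h5, h6]
    ring

theorem mem_insert_iff (x : ℤ) (l l' : List ℤ) :
    l' ∈ List.permutations'Aux x l ↔ ∃ s t, l = s ++ t ∧ l' = s ++ x :: t := by
  induction l generalizing l' with
  | nil =>
    simp [List.permutations'Aux]
  | cons y l ih =>
    simp only [List.permutations'Aux, List.mem_cons, List.mem_map, ih]
    constructor
    · rintro (rfl | ⟨_, ⟨s, t, rfl, rfl⟩, rfl⟩)
      · exact ⟨[], y :: l, rfl, rfl⟩
      · exact ⟨y :: s, t, rfl, rfl⟩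
    · rintro ⟨s, t, h1, rfl⟩
      cases s with
      | nil => left; simp at h1; simp [h1]
      | cons z s =>
        simp at h1
        right; exact ⟨s ++ x :: t, ⟨s, t, h1.2, rfl⟩, by simp [h1.1]⟩

theorem mem_SB (n : ℕ) (l : List ℤ) :
    l ∈ SB n ↔ l.length = n ∧ (l.map Int.natAbs).Nodup ∧ ∀ x ∈ l, x ≠ 0 ∧ x.natAbs ≤ n := by
  induction n generalizing l with
  | zero =>
    simp only [SB, List.mem_singleton, List.length_eq_zero_iff]
    constructor
    · rintro rfl; simp
    · exact fun h => h.1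
  | succ n ih =>
    simp only [SB, List.mem_flatMap, List.mem_append, mem_insert_iff, ih]
    constructor
    · have key : ∀ (x : ℤ) (s t : List ℤ), x.natAbs = n + 1 →
          ((s ++ t).length = n ∧ ((s ++ t).map Int.natAbs).Nodup ∧
            ∀ x ∈ s ++ t, x ≠ 0 ∧ x.natAbs ≤ n) →
          ((s ++ x :: t).length = n + 1 ∧ ((s ++ x :: t).map Int.natAbs).Nodup ∧
            ∀ y ∈ s ++ x :: t, y ≠ 0 ∧ y.natAbs ≤ n + 1) := by
        rintro x s t hx ⟨h1, h2, h3⟩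
        have hp : (s ++ x :: t).Perm (x :: (s ++ t)) := List.perm_middle
        refine ⟨by rw [hp.length_eq]; simp only [List.length_cons, h1], ?_, ?_⟩
        · rw [(hp.map _).nodup_iff, List.map_cons, List.nodup_cons]
          refine ⟨?_, h2⟩
          intro hm
          obtain ⟨y, hy, hyx⟩ := List.mem_map.1 hm
          have := (h3 y hy).2
          omega
        · intro y hy
          rw [hp.mem_iff, List.mem_cons] at hy
          rcases hy with rfl | hy
          · exact ⟨by omega, by omega⟩
          · have := h3 y hy
            exact ⟨this.1, by omega⟩
      rintro ⟨_, h, ⟨s, t, rfl, rfl⟩ | ⟨s, t, rfl, rfl⟩⟩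
      · exact key _ s t (by omega) h
      · exact key _ s t (by omega) h
    · rintro ⟨h1, h2, h3⟩
      -- `n + 1` distinct absolute values cannot all lie in `{1, …, n}`.
      have hex : ∃ x ∈ l, x.natAbs = n + 1 := by
        by_contra hno
        push Not at hno
        have hsub : (l.map Int.natAbs).toFinset ⊆ Finset.Icc 1 n := by
          intro a ha
          simp only [List.mem_toFinset, List.mem_map] at ha
          obtain ⟨x, hx, rfl⟩ := ha
          have := h3 x hx
          have := hno x hx
          simp only [Finset.mem_Icc]
          omega
        have := Finset.card_le_card hsub
        rw [List.toFinset_card_of_nodup h2] at this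
        simp at this
        omega
      obtain ⟨x, hx, hxn⟩ := hex
      obtain ⟨s, t, rfl⟩ := List.append_of_mem hx
      have hp : (s ++ x :: t).Perm (x :: (s ++ t)) := List.perm_middle
      rw [(hp.map _).nodup_iff, List.map_cons, List.nodup_cons] at h2
      refine ⟨s ++ t, ⟨?_, h2.2, ?_⟩, ?_⟩
      · simp at h1 ⊢; omega
      · intro y hy
        have h4 := h3 y (hp.mem_iff.2 (List.mem_cons_of_mem _ hy))
        have h5 : y.natAbs ≠ x.natAbs := fun h => h2.1 (List.mem_map.2 ⟨y, hy, h⟩)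
        refine ⟨h4.1, ?_⟩
        have := h4.2
        omega
      · rcases Int.natAbs_eq x with h | h
        · left; exact ⟨s, t, rfl, by rw [h, hxn]; push_cast; rfl⟩
        · right; exact ⟨s, t, rfl, by rw [h, hxn]; push_cast; rfl⟩

theorem nodup_SB (n : ℕ) : (SB n).Nodup := by
  induction n with
  | zero => simp [SB]
  | succ n ih =>
    have hx : ∀ l ∈ SB n, ∀ x : ℤ, x.natAbs = n + 1 → x ∉ l := by
      intro l hl x hx hxl
      have := (((mem_SB n l).1 hl).2.2 x hxl).2
      omega
    -- A word determines both the inserted letter and the word it was inserted in.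
    have hrec : ∀ l ∈ SB n, ∀ x : ℤ, x.natAbs = n + 1 → ∀ l' ∈ List.permutations'Aux x l,
        l'.filter (fun y => y.natAbs ≤ n) = l ∧ x ∈ l' ∧ ∀ y ∈ l', y.natAbs = n + 1 → y = x := by
      intro l hl x hx l' hl'
      obtain ⟨s, t, rfl, rfl⟩ := (mem_insert_iff _ _ _).1 hl'
      have h3 := ((mem_SB n _).1 hl).2.2
      refine ⟨?_, by simp, ?_⟩
      · rw [List.filter_append, List.filter_cons_of_neg (by simp [hx]), ← List.filter_append,
          List.filter_eq_self]
        intro y hy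
        have := (h3 y hy).2
        simp; omega
      · intro y hy hyn
        rw [List.perm_middle.mem_iff, List.mem_cons] at hy
        rcases hy with h | h
        · exact h
        · have := (h3 y h).2
          omega
    rw [SB, List.nodup_flatMap]
    constructor
    · intro l hl
      rw [List.nodup_append']
      refine ⟨(List.nodup_permutations'Aux_iff).2 (hx l hl _ (by omega)),
        (List.nodup_permutations'Aux_iff).2 (hx l hl _ (by omega)), ?_⟩
      intro l' h1 h2
      have a := (hrec l hl _ (by omega) l' h1).2.2 _ (hrec l hl _ (by omega) l' h2).2.1 (by omega)
      omega
    · refine ih.pairwise_of_forall_ne ?_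
      intro l hl m hm hne l' h1 h2
      apply hne
      have hh : ∀ k ∈ SB n, l' ∈ List.permutations'Aux ((n : ℤ) + 1) k ++
          List.permutations'Aux (-((n : ℤ) + 1)) k → l'.filter (fun y => y.natAbs ≤ n) = k := by
        intro k hk h
        rcases List.mem_append.1 h with h | h
        · exact (hrec k hk _ (by omega) l' h).1
        · exact (hrec k hk _ (by omega) l' h).1
      rw [← hh l hl h1, hh m hm h2]

/-- The generating function of `stC` over the windows of length `n` with positive first letter. -/
noncomputable def Gp (n : ℕ) : ℤ[X] := ((SB n).map wP).sum

/-- The generating function of `stC` over the windows of length `n` with negative first letter. -/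
noncomputable def Gm (n : ℕ) : ℤ[X] := ((SB n).map wM).sum

/-- Sums an insertion rule for single words over a list of words; the factor `stC l` becomes the
operator `X * derivative`. -/
theorem list_sum_rec (L : List (List ℤ)) (v w : List ℤ → ℤ[X]) (n : ℕ)
    (hw : ∀ l, X * derivative (w l) = (stC l : ℤ[X]) * w l) (f : List ℤ → List (List ℤ))
    (h : ∀ l ∈ L, ((f l).map w).sum = (stC l : ℤ[X]) * w l + X * w l
        + (2 * (n : ℤ[X]) - (stC l : ℤ[X])) * (X ^ 2 * w l) + X * v l) :
    ((L.flatMap f).map w).sum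
      = X * (1 - X ^ 2) * derivative (L.map w).sum + (X + 2 * (n : ℤ[X]) * X ^ 2) * (L.map w).sum
        + X * (L.map v).sum := by
  induction L with
  | nil => simp
  | cons l L ih =>
    have h1 := h l (by simp)
    have h2 := ih (fun x hx => h x (by simp [hx]))
    have h3 := hw l
    simp only [List.flatMap_cons, List.map_append, List.sum_append, List.map_cons, List.sum_cons,
      derivative_add, h1, h2]
    linear_combination (-(1 - X ^ 2)) * h3

theorem X_mul_derivative_X_pow (c : ℕ) :
    (X : ℤ[X]) * derivative (X ^ c) = (c : ℤ[X]) * X ^ c := by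
  cases c with
  | zero => simp
  | succ c => rw [derivative_X_pow_succ]; simp only [map_add, map_one, map_natCast]; push_cast; ring

theorem Gp_rec (n : ℕ) (hn : 1 ≤ n) : Gp (n + 1)
    = X * (1 - X ^ 2) * derivative (Gp n) + (X + 2 * (n : ℤ[X]) * X ^ 2) * Gp n + X * Gm n := by
  refine list_sum_rec (SB n) wM wP n ?_ _ ?_
  · intro l; unfold wP; split_ifs
    · exact X_mul_derivative_X_pow _
    · simp
  · intro l hl
    obtain ⟨h1, -, h3⟩ := (mem_SB n l).1 hl
    cases l with
    | nil => simp at h1; omega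
    | cons b l =>
      rw [sum_insert_wP _ b l (h3 b (by simp)).1
        (fun x hx => by have := (h3 x hx).2; rw [Int.abs_eq_natAbs]; omega), h1]

theorem Gm_rec (n : ℕ) (hn : 1 ≤ n) : Gm (n + 1)
    = X * (1 - X ^ 2) * derivative (Gm n) + (X + 2 * (n : ℤ[X]) * X ^ 2) * Gm n + X * Gp n := by
  refine list_sum_rec (SB n) wP wM n ?_ _ ?_
  · intro l; unfold wM; split_ifs
    · exact X_mul_derivative_X_pow _
    · simp
  · intro l hl
    obtain ⟨h1, -, h3⟩ := (mem_SB n l).1 hl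
    cases l with
    | nil => simp at h1; omega
    | cons b l =>
      rw [sum_insert_wM _ b l (h3 b (by simp)).1
        (fun x hx => by have := (h3 x hx).2; rw [Int.abs_eq_natAbs]; omega), h1]

/-! ### Eulerian polynomials via excedances -/

/-- The number of excedances of a permutation. -/
def exc {n : ℕ} (π : Equiv.Perm (Fin n)) : ℕ := (Finset.univ.filter fun i => i < π i).card

/-- The Eulerian polynomial `∑ π ∈ S_n, X ^ exc π`. -/
noncomputable def H (n : ℕ) : ℤ[X] := ∑ π : Equiv.Perm (Fin n), X ^ exc π

/-- Every permutation of `Fin (n + 1)` is a permutation `σ` of `Fin n`, shifted by one and multiplied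
by a transposition `(0 p)`. The excedance number is unchanged for `p = 0`. For `p = σ j + 1` the new
excedance at `0` makes up for the position of `j`, which is no longer an excedance, so the number
grows by `1` unless `j` was an excedance of `σ`. -/
theorem H_rec (n : ℕ) : H (n + 1)
    = (1 + (n : ℤ[X]) * X) * H n + X * (1 - X) * derivative (H n) := by
  have key : ∀ σ : Equiv.Perm (Fin n),
      ∑ p : Fin (n + 1), (X : ℤ[X]) ^ exc (Equiv.Perm.decomposeFin.symm (p, σ))
        = X ^ exc σ * (1 + (exc σ : ℤ[X]) + ((n : ℤ[X]) - (exc σ : ℤ[X])) * X) := by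
    intro σ
    have hexc : ∀ τ : Equiv.Perm (Fin (n + 1)), exc τ = (if 0 < τ 0 then 1 else 0) +
        ∑ i : Fin n, if i.succ < τ i.succ then 1 else 0 := by
      intro τ
      rw [exc, Finset.card_filter, Fin.sum_univ_succ]
    have h0 : exc (Equiv.Perm.decomposeFin.symm (0, σ)) = exc σ := by
      rw [hexc, exc, Finset.card_filter]
      simp [Equiv.Perm.decomposeFin_symm_apply_succ]
    have h1 : ∀ j : Fin n, exc (Equiv.Perm.decomposeFin.symm ((σ j).succ, σ))
        = exc σ + if j < σ j then 0 else 1 := by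
      intro j
      rw [hexc, exc, Finset.card_filter, ← Finset.add_sum_erase _ _ (Finset.mem_univ j),
        ← Finset.add_sum_erase (a := j) (f := fun i => if i < σ i then 1 else 0) _
          (Finset.mem_univ j)]
      have : ∀ i ∈ Finset.univ.erase j,
          (if i.succ < Equiv.Perm.decomposeFin.symm ((σ j).succ, σ) i.succ then 1 else 0)
            = if i < σ i then 1 else 0 := by
        intro i hi
        have hij : σ i ≠ σ j := fun h => (Finset.ne_of_mem_erase hi) (σ.injective h)
        rw [Equiv.Perm.decomposeFin_symm_apply_succ,
          Equiv.swap_apply_of_ne_of_ne (Fin.succ_ne_zero _) (by simpa using hij)]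
        simp
      rw [Finset.sum_congr rfl this]
      simp [Equiv.Perm.decomposeFin_symm_apply_succ]
      split_ifs <;> omega
    rw [Fin.sum_univ_succ, h0, ← Equiv.sum_comp σ]
    simp only [h1, pow_add, ← Finset.mul_sum]
    have h2 : ∑ j : Fin n, (X : ℤ[X]) ^ (if j < σ j then 0 else 1)
        = (exc σ : ℤ[X]) + ((n : ℤ[X]) - (exc σ : ℤ[X])) * X := by
      have : ∀ j : Fin n, (X : ℤ[X]) ^ (if j < σ j then 0 else 1)
          = (if j < σ j then 1 else 0) * (1 - X) + X := by
        intro j; split_ifs <;> simp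
      simp only [this, Finset.sum_add_distrib, ← Finset.sum_mul]
      rw [exc, Finset.card_filter]
      simp
      ring
    rw [h2]; ring
  rw [H, ← Equiv.sum_comp Equiv.Perm.decomposeFin.symm, Fintype.sum_prod_type_right, H,
    derivative_sum]
  simp only [key, Finset.mul_sum, ← Finset.sum_add_distrib]
  refine Finset.sum_congr rfl fun σ _ => ?_
  linear_combination -(1 - X) * X_mul_derivative_X_pow (exc σ)

/-- Both recurrences are solved by `X * (1 + X) ^ n * H (n + 1)`. -/
theorem G_eq (n : ℕ) : Gp (n + 1) = X * ((1 + X) ^ n * H (n + 1)) ∧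
    Gm (n + 1) = X * ((1 + X) ^ n * H (n + 1)) := by
  induction n with
  | zero =>
    have : H 1 = 1 := by rw [H_rec]; simp [H, exc]
    simp [Gp, Gm, SB, List.permutations'Aux, wP, wM, stC, stD, this]
  | succ n ih =>
    have hd : (1 + X) * derivative ((1 + X : ℤ[X]) ^ n) = (n : ℤ[X]) * (1 + X) ^ n := by
      cases n with
      | zero => simp
      | succ n => rw [derivative_pow_succ]; simp; ring
    rw [Gp_rec (n + 1) (by omega), Gm_rec (n + 1) (by omega), ih.1, ih.2, H_rec (n + 1)]
    simp only [derivative_mul, derivative_X]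
    push_cast
    constructor <;> linear_combination X * X * (1 - X) * H (n + 1) * hd

/-! ### Signed permutations and their windows -/

theorem IsSignedPerm.zero {n : ℕ} {w : Equiv.Perm ℤ} (hw : IsSignedPerm n w) : w 0 = 0 := by
  have := hw.1 0
  rw [neg_zero] at this
  omega

/-- A signed permutation is determined by its window. -/
theorem IsSignedPerm.ext {n : ℕ} {u v : Equiv.Perm ℤ} (hu : IsSignedPerm n u)
    (hv : IsSignedPerm n v) (h : ∀ k < n, u ((k : ℤ) + 1) = v ((k : ℤ) + 1)) : u = v := by
  ext i
  by_cases hi : (n : ℤ) < |i|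
  · rw [hu.2 i hi, hv.2 i hi]
  · rw [Int.abs_eq_natAbs] at hi
    rcases lt_trichotomy i 0 with h0 | h0 | h0
    · have h1 := h (i.natAbs - 1) (by omega)
      have h2 : (((i.natAbs - 1 : ℕ) : ℤ) + 1) = -i := by omega
      rw [h2, hu.1, hv.1] at h1
      omega
    · rw [h0, hu.zero, hv.zero]
    · have h1 := h (i.natAbs - 1) (by omega)
      have h2 : (((i.natAbs - 1 : ℕ) : ℤ) + 1) = i := by omega
      rwa [h2] at h1

theorem IsSignedPerm.bound {n : ℕ} {w : Equiv.Perm ℤ} (hw : IsSignedPerm n w) {k : ℕ}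
    (hk : k < n) : w ((k : ℤ) + 1) ≠ 0 ∧ (w ((k : ℤ) + 1)).natAbs ≤ n := by
  constructor
  · intro h
    have := w.injective (h.trans hw.zero.symm)
    omega
  · by_contra hc
    have := w.injective (hw.2 (w ((k : ℤ) + 1)) (by rw [Int.abs_eq_natAbs]; omega))
    omega

theorem IsSignedPerm.natAbs_inj {n : ℕ} {w : Equiv.Perm ℤ} (hw : IsSignedPerm n w) {j k : ℕ}
    (h : (w ((j : ℤ) + 1)).natAbs = (w ((k : ℤ) + 1)).natAbs) : j = k := by
  rcases Int.natAbs_eq_natAbs_iff.1 h with h | h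
  · have := w.injective h
    omega
  · rw [← hw.1] at h
    have := w.injective h
    omega

theorem IsSignedPerm.symm {n : ℕ} {w : Equiv.Perm ℤ} (hw : IsSignedPerm n w) :
    IsSignedPerm n w.symm := by
  refine ⟨fun i => ?_, fun i hi => ?_⟩
  · rw [Equiv.symm_apply_eq, hw.1, Equiv.apply_symm_apply]
  · rw [Equiv.symm_apply_eq, hw.2 i hi]

/-- Every word whose letters have distinct absolute values in `{1, …, n}` is the window of a signed
permutation. -/
theorem exists_isSignedPerm (n : ℕ) (f : ℕ → ℤ) (hf : ∀ k < n, f k ≠ 0 ∧ (f k).natAbs ≤ n)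
    (hinj : ∀ j < n, ∀ k < n, (f j).natAbs = (f k).natAbs → j = k) :
    ∃ w : Equiv.Perm ℤ, IsSignedPerm n w ∧ ∀ k < n, w ((k : ℤ) + 1) = f k := by
  let g : ℤ → ℤ := fun i => if i = 0 ∨ n < i.natAbs then i else
    if 0 < i then f (i.natAbs - 1) else - f (i.natAbs - 1)
  have g_out : ∀ i : ℤ, (i = 0 ∨ n < i.natAbs) → g i = i := fun i hi => if_pos hi
  have g_neg : ∀ i, g (-i) = - g i := by
    intro i
    simp only [g, Int.natAbs_neg, neg_eq_zero]
    split_ifs <;> first | rfl | omega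
  have g_in : ∀ i : ℤ, ¬ (i = 0 ∨ n < i.natAbs) → (g i).natAbs = (f (i.natAbs - 1)).natAbs := by
    intro i hi
    simp only [g, if_neg hi]
    split_ifs <;> simp
  have g_inj : Function.Injective g := by
    intro i j hij
    by_cases hi : i = 0 ∨ n < i.natAbs <;> by_cases hj : j = 0 ∨ n < j.natAbs
    · rwa [g_out i hi, g_out j hj] at hij
    · have h1 := g_in j hj
      have h2 := hf (j.natAbs - 1) (by omega)
      rw [← hij, g_out i hi] at h1
      omega
    · have h1 := g_in i hi
      have h2 := hf (i.natAbs - 1) (by omega)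
      rw [hij, g_out j hj] at h1
      omega
    · have h1 := g_in i hi
      rw [hij, g_in j hj] at h1
      have h2 := hinj _ (by omega) _ (by omega) h1
      have h3 := hf (i.natAbs - 1) (by omega)
      simp only [g, if_neg hi, if_neg hj, h2] at hij
      rw [← h2] at hij
      split_ifs at hij <;> omega
  have g_surj : Function.Surjective g := by
    intro y
    by_cases hy : n < y.natAbs
    · exact ⟨y, g_out y (Or.inr hy)⟩
    · have hmaps : Set.MapsTo g (Finset.Icc (-(n : ℤ)) n) (Finset.Icc (-(n : ℤ)) n) := by
        intro i hi
        simp only [Finset.coe_Icc, Set.mem_Icc] at hi ⊢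
        by_cases h : i = 0 ∨ n < i.natAbs
        · rw [g_out i h]; exact hi
        · have h1 := g_in i h
          have h2 := hf (i.natAbs - 1) (by omega)
          omega
      obtain ⟨x, -, hx⟩ := Finset.surjOn_of_injOn_of_card_le g hmaps g_inj.injOn le_rfl
        (show y ∈ ((Finset.Icc (-(n : ℤ)) n : Finset ℤ) : Set ℤ) by
          simp only [Finset.coe_Icc, Set.mem_Icc]; omega)
      exact ⟨x, hx⟩
  refine ⟨Equiv.ofBijective g ⟨g_inj, g_surj⟩, ⟨g_neg, fun i hi => ?_⟩, fun k hk => ?_⟩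
  · exact g_out i (Or.inr (by rw [Int.abs_eq_natAbs] at hi; omega))
  · have h1 : ¬ ((k : ℤ) + 1 = 0 ∨ n < ((k : ℤ) + 1).natAbs) := by omega
    have h2 : (0 : ℤ) < (k : ℤ) + 1 := by omega
    have h3 : ((k : ℤ) + 1).natAbs - 1 = k := by omega
    change g _ = _
    simp only [g, if_neg h1, if_pos h2, h3]

theorem sum_Icc_one (n : ℕ) (g : ℤ → ℕ) :
    ∑ i ∈ Finset.Icc (1 : ℤ) n, g i = ∑ k ∈ Finset.range n, g ((k : ℤ) + 1) := by
  induction n with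
  | zero => simp
  | succ n ih =>
    have : Finset.Icc (1 : ℤ) ((n + 1 : ℕ) : ℤ) = insert ((n : ℤ) + 1) (Finset.Icc (1 : ℤ) n) := by
      ext i; simp only [Finset.mem_insert, Finset.mem_Icc]; omega
    rw [this, Finset.sum_insert (by simp), ih, Finset.sum_range_succ, add_comm]

theorem sum_Icc_symm (n : ℕ) (g : ℤ → ℕ) :
    ∑ i ∈ Finset.Icc (-(n : ℤ)) n, g i
      = g 0 + ∑ k ∈ Finset.range n, (g ((k : ℤ) + 1) + g (-((k : ℤ) + 1))) := by
  induction n with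
  | zero => simp
  | succ n ih =>
    have : Finset.Icc (-((n + 1 : ℕ) : ℤ)) ((n + 1 : ℕ) : ℤ)
        = insert ((n : ℤ) + 1) (insert (-((n : ℤ) + 1)) (Finset.Icc (-(n : ℤ)) n)) := by
      ext i; simp only [Finset.mem_insert, Finset.mem_Icc]; omega
    rw [this, Finset.sum_insert (by simp; omega), Finset.sum_insert (by simp), ih,
      Finset.sum_range_succ]
    ring

/-- Membership in `X_n` in terms of the window: the entry `±1` is positive. -/
theorem InXn_iff {n : ℕ} (hn : 1 ≤ n) {w : Equiv.Perm ℤ} (hw : IsSignedPerm n w) :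
    0 < w.symm 1 ↔ ∀ k < n, (w ((k : ℤ) + 1)).natAbs = 1 → 0 < w ((k : ℤ) + 1) := by
  constructor
  · intro h k _ h1
    by_contra h2
    have h3 : w ((k : ℤ) + 1) = -1 := by omega
    have h4 : w.symm 1 = -((k : ℤ) + 1) := by
      rw [Equiv.symm_apply_eq, hw.1, h3, neg_neg]
    omega
  · intro h
    by_contra hc
    have h0 : w.symm 1 ≠ 0 := by
      intro h0
      rw [Equiv.symm_apply_eq, hw.zero] at h0
      omega
    have h1 := hw.symm.bound (k := 0) (by omega)
    simp only [Nat.cast_zero, zero_add] at h1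
    have h2 : w ((((w.symm 1).natAbs - 1 : ℕ) : ℤ) + 1) = -1 := by
      have : ((((w.symm 1).natAbs - 1 : ℕ) : ℤ) + 1) = - w.symm 1 := by omega
      rw [this, hw.1, Equiv.apply_symm_apply]
    have h3 := h ((w.symm 1).natAbs - 1) (by omega) (by rw [h2]; rfl)
    omega

/-! ### Flag excedances -/

theorem coeff_sum_X_pow {α : Type*} (s : Finset α) (f : α → ℕ) (m : ℕ) :
    (∑ a ∈ s, (X : ℤ[X]) ^ f a).coeff m = (s.filter fun a => f a = m).card := by
  rw [finsetSum_coeff, Finset.card_filter]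
  push_cast
  exact Finset.sum_congr rfl fun a _ => by simp [coeff_X_pow, eq_comm]

theorem fexc_eq_sum (n : ℕ) (w : Equiv.Perm ℤ) : fexc n w = ∑ k ∈ Finset.range n,
    if w ((k : ℤ) + 1) < 0 then 1 else if (k : ℤ) + 1 < w ((k : ℤ) + 1) then 2 else 0 := by
  rw [fexc, Finset.card_filter, Finset.card_filter, sum_Icc_one, sum_Icc_one, Finset.mul_sum,
    ← Finset.sum_add_distrib]
  refine Finset.sum_congr rfl fun k _ => ?_
  split_ifs <;> omega

/-- The flag excedance number of the signed permutation with absolute values `p.1` and signs `p.2`,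
where `true` is the sign `+`, and positions and values are shifted to start at `0`. -/
def fe {n : ℕ} (p : Equiv.Perm (Fin n) × (Fin n → Bool)) : ℕ :=
  ∑ i, if p.2 i then (if i < p.1 i then 2 else 0) else 1

/-- The condition defining `X_n`: the entry of absolute value `1` (here: value `0`) is positive. -/
def admissible {n : ℕ} (p : Equiv.Perm (Fin n) × (Fin n → Bool)) : Prop :=
  ∀ i, (p.1 i : ℕ) = 0 → p.2 i = true

/-- For a fixed permutation the sum over the admissible sign vectors factors over the positions. -/
theorem sum_fe (n : ℕ) : ∑ p ∈ Finset.univ.filter (admissible (n := n + 1)), (X : ℤ[X]) ^ fe p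
    = (1 + X) ^ n * H (n + 1) := by
  rw [Finset.sum_filter, Fintype.sum_prod_type, H, Finset.mul_sum]
  refine Finset.sum_congr rfl fun π _ => ?_
  have h1 : ∀ ε : Fin (n + 1) → Bool, (if admissible (π, ε) then (X : ℤ[X]) ^ fe (π, ε) else 0)
      = ∏ i, (if (π i : ℕ) = 0 ∧ ε i = false then 0 else
          if ε i then (if i < π i then X ^ 2 else 1) else X) := by
    intro ε
    split_ifs with h
    · rw [fe, ← Finset.prod_pow_eq_pow_sum]
      refine Finset.prod_congr rfl fun i _ => ?_
      have := h i
      simp only at this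
      split_ifs <;> simp_all
    · simp only [admissible, not_forall] at h
      obtain ⟨i, hi, hi2⟩ := h
      symm
      apply Finset.prod_eq_zero (Finset.mem_univ i)
      exact if_pos ⟨hi, by simpa using hi2⟩
  have h2 := Finset.prod_univ_sum (fun _ : Fin (n + 1) => (Finset.univ : Finset Bool))
    (fun i b => (if (π i : ℕ) = 0 ∧ b = false then (0 : ℤ[X]) else
          if b then (if i < π i then X ^ 2 else 1) else X))
  rw [Fintype.piFinset_univ] at h2
  rw [Finset.sum_congr rfl fun ε _ => h1 ε, ← h2]
  have h3 : ∀ i : Fin (n + 1), ∑ b : Bool, (if (π i : ℕ) = 0 ∧ b = false then (0 : ℤ[X]) else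
      if b then (if i < π i then X ^ 2 else 1) else X)
      = (if i < π i then X else 1) * (if π i = 0 then 1 else 1 + X) := by
    intro i
    rw [Fintype.sum_bool]
    by_cases h : π i = 0
    · simp [h]
    · have h' : (π i : ℕ) ≠ 0 := fun hh => h (Fin.ext hh)
      by_cases h4 : i < π i <;> simp [h, h4] <;> ring
  rw [Finset.prod_congr rfl fun i _ => h3 i, Finset.prod_mul_distrib,
    Equiv.prod_comp π (fun j => if j = 0 then (1 : ℤ[X]) else 1 + X)]
  have hA : ∏ i, (if i < π i then (X : ℤ[X]) else 1) = X ^ exc π := by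
    simp [exc, Finset.prod_ite]
  have hB : ∏ j : Fin (n + 1), (if j = 0 then (1 : ℤ[X]) else 1 + X) = (1 + X) ^ n := by
    rw [Fin.prod_univ_succ]
    simp [Fin.succ_ne_zero]
  rw [hA, hB, mul_comm]

/-- Signed permutations correspond to pairs of a permutation and a sign vector, and `fexc` to `fe`. -/
theorem ncard_fexc (n m : ℕ) :
    {w : Equiv.Perm ℤ | InXn (n + 1) w ∧ fexc (n + 1) w = m}.ncard
      = ((Finset.univ.filter (admissible (n := n + 1))).filter fun p => fe p = m).card := by
  have hex : ∀ p : Equiv.Perm (Fin (n + 1)) × (Fin (n + 1) → Bool), ∃ w : Equiv.Perm ℤ,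
      IsSignedPerm (n + 1) w ∧ ∀ i : Fin (n + 1), w (((i : ℕ) : ℤ) + 1)
        = if p.2 i then ((p.1 i : ℕ) : ℤ) + 1 else -(((p.1 i : ℕ) : ℤ) + 1) := by
    intro p
    obtain ⟨w, hw, h⟩ := exists_isSignedPerm (n + 1) (fun k => if h : k < n + 1 then
        (if p.2 ⟨k, h⟩ then ((p.1 ⟨k, h⟩ : ℕ) : ℤ) + 1 else -(((p.1 ⟨k, h⟩ : ℕ) : ℤ) + 1)) else 0)
      (by
        intro k hk
        have := (p.1 ⟨k, hk⟩).2
        simp only [dif_pos hk]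
        split_ifs <;> omega)
      (by
        intro j hj k hk h
        simp only [dif_pos hj, dif_pos hk] at h
        have h1 : p.1 ⟨j, hj⟩ = p.1 ⟨k, hk⟩ := by
          apply Fin.ext
          split_ifs at h <;> omega
        simpa using p.1.injective h1)
    refine ⟨w, hw, fun i => ?_⟩
    rw [h i i.2, dif_pos i.2]
  choose g hg1 hg2 using hex
  have hinj : Function.Injective g := by
    intro p q hpq
    have h : ∀ i, p.1 i = q.1 i ∧ p.2 i = q.2 i := by
      intro i
      have h1 := hg2 p i
      rw [hpq, hg2 q i] at h1
      rw [Fin.ext_iff]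
      cases hp : p.2 i <;> cases hq : q.2 i <;> simp [hp, hq] at h1 ⊢ <;> omega
    exact Prod.ext (Equiv.ext fun i => (h i).1) (funext fun i => (h i).2)
  have hadm : ∀ p, 0 < (g p).symm 1 ↔ admissible p := by
    intro p
    rw [InXn_iff (by omega) (hg1 p)]
    constructor
    · intro h i hi
      have h1 := h i i.2
      rw [hg2 p i] at h1
      by_contra hc
      simp [hc, hi] at h1
    · intro h k hk h1
      have h2 := hg2 p ⟨k, hk⟩
      have h3 := h ⟨k, hk⟩
      simp only at h2
      rw [h2] at h1 ⊢
      split_ifs at h1 ⊢ with h4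
      · omega
      · exact absurd (h3 (by omega)) h4
  have hfe : ∀ p, fexc (n + 1) (g p) = fe p := by
    intro p
    rw [fexc_eq_sum, Finset.sum_range, fe]
    refine Finset.sum_congr rfl fun i _ => ?_
    rw [hg2 p i]
    simp only [Fin.lt_def]
    split_ifs <;> omega
  have himg : {w : Equiv.Perm ℤ | InXn (n + 1) w ∧ fexc (n + 1) w = m}
      = g '' (((Finset.univ.filter (admissible (n := n + 1))).filter fun p => fe p = m :
          Finset _) : Set _) := by
    ext w
    simp only [Set.mem_ofPred_eq, Finset.coe_filter, Finset.mem_filter, Finset.mem_univ, true_and,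
      Set.mem_image]
    constructor
    · rintro ⟨⟨hw, hpos⟩, hf⟩
      let π : Fin (n + 1) → Fin (n + 1) := fun i =>
        ⟨(w (((i : ℕ) : ℤ) + 1)).natAbs - 1, by have := hw.bound i.2; omega⟩
      have hπ : Function.Injective π := by
        intro i j hij
        simp only [π, Fin.mk.injEq] at hij
        have h1 := hw.bound i.2
        have h2 := hw.bound j.2
        exact Fin.ext (hw.natAbs_inj (by omega))
      let p : Equiv.Perm (Fin (n + 1)) × (Fin (n + 1) → Bool) :=
        (Equiv.ofBijective π (Finite.injective_iff_bijective.1 hπ),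
          fun i => decide (0 < w (((i : ℕ) : ℤ) + 1)))
      have hgp : g p = w := by
        refine (hg1 p).ext hw fun k hk => ?_
        rw [hg2 p ⟨k, hk⟩]
        have := hw.bound hk
        simp only [p, π, Equiv.ofBijective_apply, decide_eq_true_eq]
        split_ifs <;> omega
      refine ⟨p, ⟨?_, ?_⟩, hgp⟩
      · rwa [← hadm, hgp]
      · rwa [← hfe, hgp]
    · rintro ⟨p, ⟨h1, h2⟩, rfl⟩
      exact ⟨⟨hg1 p, (hadm p).2 h1⟩, by rw [hfe, h2]⟩
  rw [himg, Set.ncard_image_of_injective _ hinj, Set.ncard_coe_finset]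

/-! ### Circular descents -/

/-- The word `u j, u (j + 1), …, u (j + m - 1)`; thus `win u 1 n` is the window of `u`. -/
def win (u : ℤ → ℤ) : ℤ → ℕ → List ℤ
  | _, 0 => []
  | j, m + 1 => u j :: win u (j + 1) m

theorem win_eq (u : ℤ → ℤ) (j : ℤ) (m : ℕ) :
    win u j m = (List.range m).map fun k : ℕ => u (j + k) := by
  induction m generalizing j with
  | zero => simp [win]
  | succ m ih =>
    rw [win, ih, List.range_succ_eq_map]
    simp [Function.comp_def, add_assoc, add_comm (1 : ℤ)]

theorem stD_win (u : ℤ → ℤ) (j : ℤ) (m : ℕ) : stD (u j) (win u (j + 1) m)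
    = (∑ k ∈ Finset.range m, if u (j + k + 1) < u (j + k) then 2 else 0)
      + if 0 < u (j + m) then 1 else 0 := by
  induction m generalizing j with
  | zero => simp [win, stD]
  | succ m ih =>
    rw [win, stD, ih, Finset.sum_range_succ']
    simp only [Nat.cast_add, Nat.cast_one, Nat.cast_zero, add_zero]
    have : ∀ k : ℤ, j + 1 + k = j + (k + 1) := fun k => by ring
    simp only [this]
    ring

/-- By `u (-i) = -u i`, the step from `-(i + 1)` to `-i` is a circular descent exactly when the step
from `i` to `i + 1` is one. The two remaining steps, from `n + 1` to `-(n + 1)` and from `-1` to `1`,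
descend exactly when `0 < u (n + 1)` and `u 1 < 0` respectively. -/
theorem cdes_eq_s4 (n : ℕ) (u : Equiv.Perm ℤ) (hu : IsSignedPerm (n + 1) u) :
    cdes (n + 1) u = stC (win u 1 (n + 1)) := by
  rw [cdes, cdesSet, Finset.card_filter, sum_Icc_symm, Finset.sum_add_distrib,
    Finset.sum_range_succ, Finset.sum_range_succ', win, stC, stD_win]
  have h1 : ∀ k ∈ Finset.range n, (if ((k : ℤ) + 1) ≠ 0 ∧
      u (csucc (n + 1) ((k : ℤ) + 1)) < u ((k : ℤ) + 1) then 1 else 0)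
      = if u (1 + k + 1) < u (1 + k) then 1 else 0 := by
    intro k hk
    rw [Finset.mem_range] at hk
    have h : csucc (n + 1) ((k : ℤ) + 1) = 1 + k + 1 := by
      unfold csucc
      rw [if_neg (by omega), if_neg (by push_cast; omega)]; ring
    rw [h, add_comm (k : ℤ) 1]
    simp only [show (1 + (k : ℤ)) ≠ 0 by omega, ne_eq, not_false_eq_true, true_and]
  have h2 : ∀ k ∈ Finset.range n, (if (-(((k + 1 : ℕ) : ℤ) + 1)) ≠ 0 ∧
      u (csucc (n + 1) (-(((k + 1 : ℕ) : ℤ) + 1))) < u (-(((k + 1 : ℕ) : ℤ) + 1)) then 1 else 0)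
      = if u (1 + k + 1) < u (1 + k) then 1 else 0 := by
    intro k hk
    rw [Finset.mem_range] at hk
    have h : csucc (n + 1) (-(((k + 1 : ℕ) : ℤ) + 1)) = -(1 + k) := by
      unfold csucc
      rw [if_neg (by omega), if_neg (by push_cast; omega)]; push_cast; ring
    rw [h, hu.1, hu.1]
    have h' : (((k + 1 : ℕ) : ℤ) + 1) = 1 + k + 1 := by push_cast; ring
    rw [h']
    simp only [show -(1 + (k : ℤ) + 1) ≠ 0 by omega, ne_eq, not_false_eq_true, true_and,
      neg_lt_neg_iff]
  have h3 : csucc (n + 1) ((n : ℤ) + 1) = -(1 + n) := by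
    unfold csucc
    rw [if_neg (by omega), if_pos (by push_cast; omega)]; push_cast; ring
  have h4 : csucc (n + 1) (-1) = 1 := if_pos rfl
  rw [Finset.sum_congr rfl h1, Finset.sum_congr rfl h2, h3]
  simp only [Nat.cast_zero, zero_add, h4, hu.1, add_comm (n : ℤ) 1]
  have h5 : ∑ k ∈ Finset.range n, (if u (1 + k + 1) < u (1 + k) then 2 else 0)
      = 2 * ∑ k ∈ Finset.range n, (if u (1 + k + 1) < u (1 + k) then 1 else 0) := by
    rw [Finset.mul_sum]
    exact Finset.sum_congr rfl fun k _ => by split_ifs <;> rfl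
  rw [h5]
  have h6 : (1 + (n : ℤ)) ≠ 0 := by omega
  generalize u (1 + (n : ℤ)) = a
  generalize u 1 = b
  simp only [h6, ne_eq, not_true_eq_false, not_false_eq_true, false_and, true_and, if_false,
    neg_eq_zero, one_ne_zero]
  split_ifs <;> omega

/-- The map `w ↦` window of `w⁻¹` identifies `X_{n+1}` with the windows with positive first letter. -/
theorem ncard_cdes (n m : ℕ) :
    {w : Equiv.Perm ℤ | InXn (n + 1) w ∧ cdes (n + 1) w.symm = m}.ncard
      = (((SB (n + 1)).toFinset.filter fun l => 0 < l.headD 0).filter fun l => stC l = m).card := by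
  rw [← Set.ncard_coe_finset]
  have hwin : ∀ w : Equiv.Perm ℤ,
      win w 1 (n + 1) = (List.range (n + 1)).map fun k : ℕ => w ((k : ℤ) + 1) := by
    intro w
    rw [win_eq]
    simp only [add_comm (1 : ℤ)]
  refine Set.ncard_congr (fun w _ => win w.symm 1 (n + 1)) ?_ ?_ ?_
  · rintro w ⟨⟨hw, hpos⟩, hc⟩
    have hs := hw.symm
    simp only [Finset.coe_filter, Finset.mem_filter, List.mem_toFinset, Set.mem_ofPred_eq]
    refine ⟨⟨?_, hpos⟩, by rw [← cdes_eq_s4 n _ hs, hc]⟩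
    rw [mem_SB, hwin]
    refine ⟨by simp, ?_, ?_⟩
    · rw [List.map_map]
      exact List.Nodup.map_on (fun j _ k _ h => hs.natAbs_inj h) List.nodup_range
    · intro x hx
      obtain ⟨k, hk, rfl⟩ := List.mem_map.1 hx
      exact hs.bound (List.mem_range.1 hk)
  · rintro w v ⟨⟨hw, -⟩, -⟩ ⟨⟨hv, -⟩, -⟩ h
    simp only [hwin] at h
    have : w.symm = v.symm := hw.symm.ext hv.symm fun k hk =>
      List.map_inj_left.1 h k (List.mem_range.2 hk)
    exact Equiv.symm_bijective.injective this
  · intro l hl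
    simp only [Finset.coe_filter, Finset.mem_filter, List.mem_toFinset, Set.mem_ofPred_eq] at hl
    obtain ⟨⟨hl, hpos⟩, hc⟩ := hl
    obtain ⟨h1, h2, h3⟩ := (mem_SB _ _).1 hl
    obtain ⟨u, hu, huf⟩ := exists_isSignedPerm (n + 1) (fun k => l.getD k 0)
      (by
        intro k hk
        rw [List.getD_eq_getElem _ _ (by omega)]
        exact h3 _ (List.getElem_mem _))
      (by
        intro j hj k hk h
        simp only [List.getD_eq_getElem l 0 (show j < l.length by omega),
          List.getD_eq_getElem l 0 (show k < l.length by omega)] at h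
        exact (List.Nodup.getElem_inj_iff h2 (i := j) (j := k) (hi := by simp; omega)
          (hj := by simp; omega)).1 (by simpa using h))
    have hul : win u 1 (n + 1) = l := by
      rw [hwin]
      refine List.ext_getElem (by simp [h1]) fun k hk hk' => ?_
      simp only [List.getElem_map, List.getElem_range]
      rw [huf k (by omega), List.getD_eq_getElem _ _ hk']
    refine ⟨u.symm, ⟨⟨hu.symm, ?_⟩, ?_⟩, hul⟩
    · rw [← hul] at hpos
      exact hpos
    · rw [Equiv.symm_symm, cdes_eq_s4 n u hu, hul, hc]

theorem Gp_eq_sum (n : ℕ) :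
    Gp n = ∑ l ∈ (SB n).toFinset.filter fun l => 0 < l.headD 0, X ^ stC l := by
  rw [Finset.sum_filter, List.sum_toFinset _ (nodup_SB n)]
  rfl

/-- Corollary: two volume formulas for `Δ_{C_n,k}`.
For all `n ≥ 1` and `k ≥ 1`,
`#{w ∈ X_n : fexc(w) = k-1} = #{w ∈ X_n : cdes(w⁻¹) = k}`. -/
theorem fexc_cdes_equidistributed (n k : ℕ) (hn : 1 ≤ n) (hk : 1 ≤ k) :
    {w : Equiv.Perm ℤ | InXn n w ∧ fexc n w = k - 1}.ncard
      = {w : Equiv.Perm ℤ | InXn n w ∧ cdes n w.symm = k}.ncard := by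
  obtain ⟨n, rfl⟩ : ∃ m, n = m + 1 := ⟨n - 1, by omega⟩
  obtain ⟨k, rfl⟩ : ∃ m, k = m + 1 := ⟨k - 1, by omega⟩
  rw [Nat.add_sub_cancel, ncard_fexc, ncard_cdes]
  rw [← Nat.cast_inj (R := ℤ), ← coeff_sum_X_pow, ← coeff_sum_X_pow, ← Gp_eq_sum, (G_eq n).1,
    sum_fe, coeff_X_mul]
end
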